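/- arXiv:2508.02615 — 2 statements merged into one kernel-verified Lean document; each statement's English description precedes it below -/
import Mathlib

section
/- Let (E,d_E) be a separable metric space, let μ ∈ 𝒫_1(E) and let n ∈ ℕ. Then (1/(22·√(ln(2n)))) · max_{0 ≤ k ≤ ⌊log₂ n⌋} √(2^k/n) · b_{2^k,1}(μ) ≤ 𝔼[W_1(μ_n, μ)] ≤ 5 · ∑_{k=0}^{⌊log₂ n⌋} √(2^k/n) · b_{2^k,1}(μ), where μ_n is the empirical measure of μ with sample size n. -/
open MeasureTheory ENNReal Filter

noncomputable section

/-- The `p`-Wasserstein distance between two measures on a metric space, as an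
extended nonnegative real: the infimum over all couplings `γ` (measures on `E × E`
with the prescribed marginals) of `(∫ d(x,y)^p dγ)^(1/p)`. -/
def Wp {E : Type*} [MetricSpace E] [MeasurableSpace E] (p : ℝ) (μ ν : Measure E) : ℝ≥0∞ :=
  ⨅ γ ∈ {γ : Measure (E × E) | γ.map Prod.fst = μ ∧ γ.map Prod.snd = ν},
    (∫⁻ z, edist z.1 z.2 ^ p ∂γ) ^ (1 / p)

/-- The (uniform) discrete measure `(1/n) ∑ δ_{X i}`. -/
def empiricalMeasure {E : Type*} [MeasurableSpace E] (n : ℕ) (X : Fin n → E) : Measure E :=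
  (n : ℝ≥0∞)⁻¹ • ∑ i, Measure.dirac (X i)

/-- The law of `n` independent samples of `μ`. -/
def sampleMeasure {E : Type*} [MeasurableSpace E] (μ : Measure E) (n : ℕ) :
    Measure (Fin n → E) :=
  Measure.pi fun _ => μ

/-- `𝔼[W_p(μ_n, μ)]`, where `μ_n` is the empirical measure of `μ` with sample size `n`. -/
def expWp {E : Type*} [MetricSpace E] [MeasurableSpace E] (p : ℝ) (μ : Measure E) (n : ℕ) :
    ℝ≥0∞ :=
  ∫⁻ X, Wp p (empiricalMeasure n X) μ ∂(sampleMeasure μ n)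

/-- `(𝔼[W_p(μ_n, μ)^p])^{1/p}`, where `μ_n` is the empirical measure of `μ` with
sample size `n`. -/
def expWpPow {E : Type*} [MetricSpace E] [MeasurableSpace E] (p : ℝ) (μ : Measure E) (n : ℕ) :
    ℝ≥0∞ :=
  (∫⁻ X, (Wp p (empiricalMeasure n X) μ) ^ p ∂(sampleMeasure μ n)) ^ (1 / p)

/-- The optimal uniform quantization error
`b_{n,p}(μ) = inf_{x₁,…,x_n} W_p(μ, (1/n) ∑ δ_{x_i})`. -/
def unifQuantErr {E : Type*} [MetricSpace E] [MeasurableSpace E] (p : ℝ) (n : ℕ)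
    (μ : Measure E) : ℝ≥0∞ :=
  ⨅ x : Fin n → E, Wp p μ (empiricalMeasure n x)

/-- The optimal quantization error `e_{n,p}(μ)`: the infimum of `W_p(μ, ν)` over all
probability measures `ν` supported on at most `n` points. -/
def quantErr {E : Type*} [MetricSpace E] [MeasurableSpace E] (p : ℝ) (n : ℕ)
    (μ : Measure E) : ℝ≥0∞ :=
  ⨅ ν ∈ {ν : Measure E | IsProbabilityMeasure ν ∧
      ∃ S : Finset E, S.card ≤ n ∧ ν (↑S : Set E)ᶜ = 0}, Wp p μ ν

/-- `μ` has a finite `p`-th moment: `∫ d(x, x₀)^p dμ(x) < ∞` for some `x₀`. -/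
def HasFiniteMoment {E : Type*} [MetricSpace E] [MeasurableSpace E] (p : ℝ)
    (μ : Measure E) : Prop :=
  ∃ x₀ : E, ∫⁻ x, edist x x₀ ^ p ∂μ ≠ ∞

end

/-- Finite Kantorovich duality. -/
lemma finite_duality {α β E : Type*} [Fintype α] [Fintype β] [MetricSpace E]
    (x : α → E) (y : β → E) (p : α → ℝ) (q : β → ℝ)
    (hp : ∀ a, 0 ≤ p a) (hq : ∀ b, 0 ≤ q b) (hp1 : ∑ a, p a = 1) (hq1 : ∑ b, q b = 1) (w : ℝ)
    (h : ∀ f : E → ℝ, LipschitzWith 1 f → ∑ a, p a * f (x a) - ∑ b, q b * f (y b) ≤ w) :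
    ∃ π : α → β → ℝ, (∀ a b, 0 ≤ π a b) ∧ (∀ a, ∑ b, π a b = p a) ∧ (∀ b, ∑ a, π a b = q b) ∧
      ∑ a, ∑ b, π a b * dist (x a) (y b) ≤ w := by
  classical
  have hβ : Nonempty β := by
    by_contra hne
    rw [not_nonempty_iff] at hne
    simp at hq1
  have hne : (Finset.univ : Finset β).Nonempty := Finset.univ_nonempty
  -- scaled hypothesis
  have h' : ∀ t : ℝ, 0 ≤ t → ∀ f : E → ℝ, (∀ x x', f x ≤ t * dist x x' + f x') →
      ∑ a, p a * f (x a) - ∑ b, q b * f (y b) ≤ t * w := by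
    intro t ht f hf
    rcases ht.eq_or_lt with rfl | htp
    · have hc : ∀ z, f z = f (y hβ.some) := fun z => le_antisymm (by simpa using hf z (y hβ.some))
        (by simpa using hf (y hβ.some) z)
      simp_rw [fun a => hc (x a), fun b => hc (y b)]
      rw [← Finset.sum_mul, ← Finset.sum_mul, hp1, hq1]; simp
    · have hl : LipschitzWith 1 (fun z => f z / t) := by
        apply LipschitzWith.of_le_add
        intro a b
        have := hf a b
        rw [div_le_iff₀ htp, add_mul, div_mul_cancel₀ _ htp.ne']; linarith
      have := h _ hl
      simp_rw [mul_div_assoc'] at this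
      rw [← Finset.sum_div, ← Finset.sum_div, ← sub_div, div_le_iff₀ htp] at this
      linarith
  let S : (α → β → ℝ) → Set ℝ := fun g => {r | ∃ (u : α → ℝ) (v : β → ℝ) (t : ℝ), 0 ≤ t ∧
    (∀ a b, g a b ≤ u a + v b + t * dist (x a) (y b)) ∧
    r = ∑ a, p a * u a + ∑ b, q b * v b + t * w}
  have hbd : ∀ g H, (∀ a b, -H ≤ g a b) → ∀ r ∈ S g, -H ≤ r := by
    rintro g H hH r ⟨u, v, t, ht, huv, rfl⟩
    let F : E → ℝ := fun z => Finset.univ.inf' hne (fun b => t * dist z (y b) + v b)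
    have hF : ∀ z z', F z ≤ t * dist z z' + F z' := by
      intro z z'
      obtain ⟨b, -, hb⟩ := Finset.exists_mem_eq_inf' hne (fun b => t * dist z' (y b) + v b)
      have h1 : F z ≤ t * dist z (y b) + v b := Finset.inf'_le _ (Finset.mem_univ b)
      have h2 : F z' = t * dist z' (y b) + v b := hb
      have h3 := mul_le_mul_of_nonneg_left (dist_triangle z z' (y b)) ht
      linarith
    have h1 := h' t ht F hF
    have h2 : ∑ b, q b * F (y b) ≤ ∑ b, q b * v b := by
      apply Finset.sum_le_sum; intro b _
      apply mul_le_mul_of_nonneg_left _ (hq b)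
      have : F (y b) ≤ t * dist (y b) (y b) + v b := Finset.inf'_le _ (Finset.mem_univ b)
      simpa using this
    have h3 : ∑ a, p a * (-u a - H) ≤ ∑ a, p a * F (x a) := by
      apply Finset.sum_le_sum; intro a _
      apply mul_le_mul_of_nonneg_left _ (hp a)
      apply Finset.le_inf'
      intro b _
      have := huv a b; have := hH a b
      linarith
    have h4 : ∑ a, p a * (-u a - H) = - ∑ a, p a * u a - H := by
      have : ∀ a, p a * (-u a - H) = - (p a * u a) - p a * H := fun a => by ring
      simp_rw [this]
      rw [Finset.sum_sub_distrib, ← Finset.sum_mul, hp1, Finset.sum_neg_distrib]; ring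
    linarith
  have hbelow : ∀ g, BddBelow (S g) := by
    intro g
    refine ⟨-(∑ a, ∑ b, |g a b|), fun r hr => hbd g _ (fun a b => ?_) r hr⟩
    have h1 : |g a b| ≤ ∑ b, |g a b| :=
      Finset.single_le_sum (f := fun b => |g a b|) (fun _ _ => abs_nonneg _) (Finset.mem_univ b)
    have h2 : ∑ b, |g a b| ≤ ∑ a, ∑ b, |g a b| :=
      Finset.single_le_sum (f := fun a => ∑ b, |g a b|)
        (fun _ _ => Finset.sum_nonneg fun _ _ => abs_nonneg _) (Finset.mem_univ a)
    have := neg_abs_le (g a b)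
    linarith
  have hnon : ∀ g, (S g).Nonempty := by
    intro g
    refine ⟨_, fun a => ∑ b, |g a b|, 0, 0, le_rfl, fun a b => ?_, rfl⟩
    have h1 : |g a b| ≤ ∑ b, |g a b| :=
      Finset.single_le_sum (f := fun b => |g a b|) (fun _ _ => abs_nonneg _) (Finset.mem_univ b)
    have := le_abs_self (g a b)
    simp; linarith
  let N : (α → β → ℝ) → ℝ := fun g => sInf (S g)
  have Nle : ∀ g r, r ∈ S g → N g ≤ r := fun g r hr => csInf_le (hbelow g) hr
  have Nhom1 : ∀ c : ℝ, 0 < c → ∀ g, N (c • g) ≤ c * N g := by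
    intro c hc g
    have : N (c • g) / c ≤ N g := by
      apply le_csInf (hnon g)
      rintro r ⟨u, v, t, ht, huv, rfl⟩
      rw [div_le_iff₀ hc]
      refine Nle _ _ ⟨c • u, c • v, c * t, by positivity, fun a b => ?_, ?_⟩
      · have := mul_le_mul_of_nonneg_left (huv a b) hc.le
        simp only [Pi.smul_apply, smul_eq_mul]; linarith
      · simp only [Pi.smul_apply, smul_eq_mul, add_mul, Finset.sum_mul]
        congr 1
        · congr 1 <;> (apply Finset.sum_congr rfl; intros; ring)
        · ring
    rw [div_le_iff₀ hc] at this; linarith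
  have Nhom : ∀ c : ℝ, 0 < c → ∀ g, N (c • g) = c * N g := by
    intro c hc g
    apply le_antisymm (Nhom1 c hc g)
    have := Nhom1 c⁻¹ (inv_pos.2 hc) (c • g)
    rw [smul_smul, inv_mul_cancel₀ hc.ne', one_smul] at this
    have h2 := mul_le_mul_of_nonneg_left this hc.le
    rwa [← mul_assoc, mul_inv_cancel₀ hc.ne', one_mul] at h2
  have Nadd : ∀ g g', N (g + g') ≤ N g + N g' := by
    intro g g'
    have key : ∀ r ∈ S g, ∀ r' ∈ S g', N (g + g') ≤ r + r' := by
      rintro r ⟨u, v, t, ht, huv, rfl⟩ r' ⟨u', v', t', ht', huv', rfl⟩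
      refine Nle _ _ ⟨u + u', v + v', t + t', by positivity, fun a b => ?_, ?_⟩
      · have := huv a b; have := huv' a b
        simp only [Pi.add_apply]; linarith
      · simp only [Pi.add_apply, mul_add, Finset.sum_add_distrib]; ring
    have h1 : ∀ r ∈ S g, N (g + g') - r ≤ N g' := fun r hr =>
      le_csInf (hnon g') fun r' hr' => by linarith [key r hr r' hr']
    have h2 : N (g + g') - N g' ≤ N g := le_csInf (hnon g) fun r hr => by linarith [h1 r hr]
    linarith
  have N0 : N 0 = 0 := by
    have := Nhom 2 (by norm_num) 0
    rw [smul_zero] at this; linarith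
  obtain ⟨G, -, hG⟩ := exists_extension_of_le_sublinear
    (⟨⊥, 0⟩ : (α → β → ℝ) →ₗ.[ℝ] ℝ) N Nhom Nadd (by
      rintro ⟨z, hz⟩
      have : z = 0 := by simpa using hz
      subst this
      simp [N0])
  let e : α → β → (α → β → ℝ) := fun a b a' b' => if a' = a ∧ b' = b then 1 else 0
  have hdec : ∀ g : α → β → ℝ, g = ∑ a, ∑ b, g a b • e a b := by
    intro g
    funext a' b'
    simp only [Finset.sum_apply, Pi.smul_apply, smul_eq_mul, e]
    rw [Finset.sum_eq_single a' (by
      intro a _ ha; apply Finset.sum_eq_zero; intro b _; simp [ha.symm]) (by simp)]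
    rw [Finset.sum_eq_single b' (by intro b _ hb; simp [hb.symm]) (by simp)]
    simp
  have hGdec : ∀ g : α → β → ℝ, G g = ∑ a, ∑ b, G (e a b) * g a b := by
    intro g
    conv_lhs => rw [hdec g]
    simp only [map_sum, map_smul, smul_eq_mul]
    simp_rw [mul_comm]
  have hlin : ∀ (u : α → ℝ) (v : β → ℝ), G (fun a b => u a + v b) =
      ∑ a, p a * u a + ∑ b, q b * v b := by
    intro u v
    apply le_antisymm
    · refine (hG _).trans (Nle _ _ ⟨u, v, 0, le_rfl, fun a b => by simp, by simp⟩)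
    · have h1 := (hG (fun a b => -u a + -v b)).trans
        (Nle _ _ ⟨-u, -v, 0, le_rfl, fun a b => by simp, rfl⟩)
      have h2 : G (fun a b => -u a + -v b) = - G (fun a b => u a + v b) := by
        rw [← map_neg]; congr 1; funext a b; simp; ring
      rw [h2] at h1
      simp at h1
      linarith
  refine ⟨fun a b => G (e a b), fun a b => ?_, fun a => ?_, fun b => ?_, ?_⟩
  · have h1 := (hG (-e a b)).trans (Nle _ 0 ⟨0, 0, 0, le_rfl, fun a' b' => by
      simp only [e, Pi.neg_apply]; split_ifs <;> simp, by simp⟩)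
    rw [map_neg] at h1; linarith
  · have h1 := hlin (fun a' => if a' = a then 1 else 0) 0
    rw [hGdec] at h1
    simpa using h1
  · have h1 := hlin 0 (fun b' => if b' = b then 1 else 0)
    rw [hGdec] at h1
    simpa using h1
  · rw [← hGdec (fun a b => dist (x a) (y b))]
    exact (hG _).trans (Nle _ _ ⟨0, 0, 1, zero_le_one, fun a b => by simp, by simp⟩)

section basics
set_option linter.unusedSectionVars false
variable {E : Type*} [MetricSpace E] [SecondCountableTopology E] [MeasurableSpace E] [BorelSpace E]
  {μ : Measure E} [IsProbabilityMeasure μ]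

lemma moment_integrable (hμ : HasFiniteMoment 1 μ) (x₀ : E) :
    Integrable (fun x => dist x x₀) μ := by
  obtain ⟨x₁, hx₁⟩ := hμ
  have h1 : Integrable (fun x => dist x x₁) μ := by
    refine ⟨(continuous_id.dist continuous_const).aestronglyMeasurable, ?_⟩
    rw [hasFiniteIntegral_iff_norm]
    simp only [Real.norm_eq_abs, abs_of_nonneg dist_nonneg, ← edist_dist]
    simpa using lt_top_iff_ne_top.2 hx₁
  refine (h1.add (integrable_const (dist x₁ x₀))).mono'
    (continuous_id.dist continuous_const).aestronglyMeasurable ?_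
  filter_upwards with x
  simp only [Real.norm_eq_abs, abs_of_nonneg dist_nonneg, Pi.add_apply]
  exact dist_triangle _ _ _

lemma lip_integrable (hI : ∀ x₀ : E, Integrable (fun x => dist x x₀) μ) {K : NNReal} {f : E → ℝ}
    (hf : LipschitzWith K f) : Integrable f μ := by
  rcases isEmpty_or_nonempty E with h | ⟨⟨x₀⟩⟩
  · exact ⟨hf.continuous.aestronglyMeasurable, by
      rw [hasFiniteIntegral_iff_norm, Measure.eq_zero_of_isEmpty μ]; simp⟩
  refine (((hI x₀).const_mul K).add (integrable_const |f x₀|)).mono'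
    hf.continuous.aestronglyMeasurable ?_
  filter_upwards with x
  have h1 := hf.dist_le_mul x x₀
  rw [Real.dist_eq] at h1
  have h2 := abs_sub_abs_le_abs_sub (f x) (f x₀)
  simp only [Real.norm_eq_abs, Pi.add_apply]
  linarith

lemma dev_le (hI : ∀ x₀ : E, Integrable (fun x => dist x x₀) μ) {f : E → ℝ}
    (hf : LipschitzWith 1 f) (x : E) : f x - ∫ y, f y ∂μ ≤ ∫ y, dist y x ∂μ := by
  have hfi := lip_integrable hI hf
  have h1 : f x - ∫ y, f y ∂μ = ∫ y, (f x - f y) ∂μ := by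
    rw [integral_sub (integrable_const _) hfi]; simp
  rw [h1]
  apply integral_mono ((integrable_const _).sub hfi) (hI x)
  intro y
  have := hf.dist_le_mul x y
  rw [Real.dist_eq] at this
  have h2 := le_abs_self (f x - f y)
  simp at this ⊢
  rw [dist_comm y x]; linarith

/-- sup over 1-Lipschitz functions of the centered sum over the index set `A`. -/
noncomputable def Sd (μ : Measure E) {ι : Type*} (A : Finset ι) (X : ι → E) : ℝ :=
  ⨆ f : {f : E → ℝ // LipschitzWith 1 f}, ∑ s ∈ A, (f.1 (X s) - ∫ y, f.1 y ∂μ)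

instance : Nonempty {f : E → ℝ // LipschitzWith 1 f} := ⟨⟨fun _ => 0, LipschitzWith.const' 0⟩⟩

variable {ι : Type*}

lemma le_Sd (hI : ∀ x₀ : E, Integrable (fun x => dist x x₀) μ) (A : Finset ι) (X : ι → E)
    {f : E → ℝ} (hf : LipschitzWith 1 f) : ∑ s ∈ A, (f (X s) - ∫ y, f y ∂μ) ≤ Sd μ A X := by
  refine le_ciSup (f := fun f : {f : E → ℝ // LipschitzWith 1 f} =>
    ∑ s ∈ A, (f.1 (X s) - ∫ y, f.1 y ∂μ)) ?_ ⟨f, hf⟩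
  refine ⟨∑ s ∈ A, ∫ y, dist y (X s) ∂μ, ?_⟩
  rintro _ ⟨g, rfl⟩
  exact Finset.sum_le_sum fun s _ => dev_le hI g.2 _

lemma Sd_le (A : Finset ι) (X : ι → E) {w : ℝ}
    (h : ∀ f : E → ℝ, LipschitzWith 1 f → ∑ s ∈ A, (f (X s) - ∫ y, f y ∂μ) ≤ w) :
    Sd μ A X ≤ w := ciSup_le fun f => h f.1 f.2

lemma Sd_nonneg (hI : ∀ x₀ : E, Integrable (fun x => dist x x₀) μ) (A : Finset ι) (X : ι → E) :
    0 ≤ Sd μ A X := by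
  have := le_Sd hI A X (f := fun _ => 0) (LipschitzWith.const' 0)
  simpa using this

lemma le_Sd_mul (hI : ∀ x₀ : E, Integrable (fun x => dist x x₀) μ) (A : Finset ι) (X : ι → E)
    {K : NNReal} (hK : 0 < K)
    {f : E → ℝ} (hf : LipschitzWith K f) :
    ∑ s ∈ A, (f (X s) - ∫ y, f y ∂μ) ≤ K * Sd μ A X := by
  have hK' : (0 : ℝ) < K := hK
  have hl : LipschitzWith 1 (fun z => f z / K) := by
    apply LipschitzWith.of_le_add
    intro a b
    have h1 := hf.dist_le_mul a b
    rw [Real.dist_eq] at h1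
    have h2 := le_abs_self (f a - f b)
    rw [div_le_iff₀ hK', add_mul, div_mul_cancel₀ _ hK'.ne']; linarith
  have := le_Sd hI A X hl
  simp_rw [integral_div, ← sub_div] at this
  rw [← Finset.sum_div, div_le_iff₀ hK'] at this
  linarith

lemma Sd_lip (hI : ∀ x₀ : E, Integrable (fun x => dist x x₀) μ) (A : Finset ι) (X Y : ι → E) :
    Sd μ A X ≤ Sd μ A Y + ∑ s ∈ A, dist (X s) (Y s) := by
  apply Sd_le
  intro f hf
  have h1 := le_Sd hI A Y hf
  have h2 : ∑ s ∈ A, (f (X s) - ∫ y, f y ∂μ) ≤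
      ∑ s ∈ A, ((f (Y s) - ∫ y, f y ∂μ) + dist (X s) (Y s)) := by
    apply Finset.sum_le_sum
    intro s _
    have h1 := hf.dist_le_mul (X s) (Y s)
    rw [Real.dist_eq] at h1
    have h2 := le_abs_self (f (X s) - f (Y s))
    simp at h1
    linarith
  rw [Finset.sum_add_distrib] at h2
  linarith

lemma Sd_continuous [Fintype ι] (hI : ∀ x₀ : E, Integrable (fun x => dist x x₀) μ) (A : Finset ι) :
    Continuous (fun X : ι → E => Sd μ A X) := by
  apply LipschitzWith.continuous (K := A.card)
  apply LipschitzWith.of_le_add_mul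
  intro X Y
  refine (Sd_lip hI A X Y).trans ?_
  gcongr
  calc ∑ s ∈ A, dist (X s) (Y s) ≤ ∑ s ∈ A, dist X Y :=
        Finset.sum_le_sum fun s _ => dist_le_pi_dist _ _ _
    _ = _ := by simp

lemma Sd_integrable [Fintype ι] (hI : ∀ x₀ : E, Integrable (fun x => dist x x₀) μ)
    (A : Finset ι) : Integrable (fun X : ι → E => Sd μ A X) (Measure.pi fun _ => μ) := by
  have hE : Nonempty E := by
    by_contra h
    rw [not_nonempty_iff] at h
    exact IsProbabilityMeasure.ne_zero μ (Measure.eq_zero_of_isEmpty μ)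
  obtain ⟨x₀⟩ := hE
  have h1 : ∀ s, Integrable (fun X : ι → E => dist (X s) x₀) (Measure.pi fun _ => μ) := fun s =>
    (measurePreserving_eval (fun _ : ι => μ) s).integrable_comp_of_integrable (hI x₀)
  refine ((integrable_const (Sd μ A (fun _ => x₀))).add (integrable_finsetSum A fun s _ => h1 s)).mono'
    (Sd_continuous hI A).aestronglyMeasurable ?_
  filter_upwards with X
  rw [Real.norm_eq_abs, abs_of_nonneg (Sd_nonneg hI A X)]
  simpa using Sd_lip hI A X (fun _ => x₀)

lemma Sd_glue {n : ℕ} (hI : ∀ x₀ : E, Integrable (fun x => dist x x₀) μ) (A : Finset (Fin n)) :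
    ∫ X, Sd μ A X ∂(sampleMeasure μ n) ≤ ∫ X, Sd μ Finset.univ X ∂(sampleMeasure μ n) := by
  classical
  unfold sampleMeasure
  let P : Measure (Fin n → E) := Measure.pi fun _ => μ
  let G : (Fin n → E) × (Fin n → E) → (Fin n → E) := fun z i => if i ∈ A then z.1 i else z.2 i
  have hGm : Measurable G := by
    apply measurable_pi_lambda
    intro i
    by_cases h : i ∈ A <;> simp only [G, h, if_true, if_false] <;> fun_prop
  have hG : MeasurePreserving G (P.prod P) P := by
    refine ⟨hGm, ?_⟩
    symm
    apply Measure.pi_eq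
    intro s hs
    rw [Measure.map_apply hGm (MeasurableSet.univ_pi hs)]
    have : G ⁻¹' (Set.univ.pi s) = (Set.univ.pi fun i => if i ∈ A then s i else Set.univ) ×ˢ
        (Set.univ.pi fun i => if i ∈ A then Set.univ else s i) := by
      ext z
      simp only [G, Set.mem_preimage, Set.mem_pi, Set.mem_univ, true_imp_iff, Set.mem_prod]
      constructor
      · intro h
        constructor <;> intro i <;> have := h i <;> split_ifs at * <;> simp_all
      · rintro ⟨h1, h2⟩ i
        have := h1 i; have := h2 i
        split_ifs at * <;> simp_all
    rw [this, Measure.prod_prod, Measure.pi_pi, Measure.pi_pi, ← Finset.prod_mul_distrib]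
    apply Finset.prod_congr rfl
    intro i _
    split_ifs <;> simp
  have hint := Sd_integrable (ι := Fin n) hI Finset.univ
  have hint2 : Integrable (fun z => Sd μ Finset.univ (G z)) (P.prod P) :=
    hG.integrable_comp_of_integrable hint
  have h1 : ∫ X, Sd μ Finset.univ X ∂P = ∫ X, ∫ X', Sd μ Finset.univ (G (X, X')) ∂P ∂P := by
    rw [← integral_prod _ hint2]
    have h0 := integral_map (μ := P.prod P) hGm.aemeasurable (f := fun X => Sd μ Finset.univ X)
      (by rw [hG.map_eq]; exact hint.aestronglyMeasurable)
    rw [hG.map_eq] at h0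
    exact h0
  change ∫ X, Sd μ A X ∂P ≤ ∫ X, Sd μ Finset.univ X ∂P
  rw [h1]
  apply integral_mono_ae (Sd_integrable hI A) hint2.integral_prod_left
  filter_upwards [hint2.prod_right_ae] with X hX
  apply Sd_le
  intro f hf
  have hfi := lip_integrable hI hf
  have hfi2 : ∀ i : Fin n, Integrable (fun X' : Fin n → E => f (X' i)) P := fun i =>
    (measurePreserving_eval (fun _ : Fin n => μ) i).integrable_comp_of_integrable hfi
  have hfi3 : ∀ i : Fin n, ∫ X', f (X' i) ∂P = ∫ y, f y ∂μ := fun i => by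
    rw [← (measurePreserving_eval (fun _ : Fin n => μ) i).map_eq, integral_map]
    · exact (measurable_pi_apply i).aemeasurable
    · exact hf.continuous.aestronglyMeasurable
  have hterm : ∀ i ∈ Finset.univ, Integrable
      (fun X' : Fin n → E => f (G (X, X') i) - ∫ y, f y ∂μ) P := by
    intro i _
    by_cases h : i ∈ A
    · simp only [G, h, if_true]; exact integrable_const _
    · simp only [G, h, if_false]; exact (hfi2 i).sub (integrable_const _)
  calc ∑ s ∈ A, (f (X s) - ∫ y, f y ∂μ)
      = ∫ X', ∑ i, (f (G (X, X') i) - ∫ y, f y ∂μ) ∂P := by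
        rw [integral_finsetSum _ hterm]
        rw [← Finset.sum_subset (Finset.subset_univ A)]
        · apply Finset.sum_congr rfl
          intro i hi
          simp [G, hi]
        · intro i _ hi
          simp only [G, hi, if_false]
          rw [integral_sub (hfi2 i) (integrable_const _), hfi3]; simp
    _ ≤ _ := integral_mono (integrable_finsetSum _ hterm) hX fun X' => le_Sd hI _ _ hf

end basics

section kd
set_option linter.unusedSectionVars false
variable {E : Type*} [MetricSpace E] [SecondCountableTopology E] [MeasurableSpace E] [BorelSpace E]
  {μ : Measure E} [IsProbabilityMeasure μ]

lemma nonempty_of_prob (μ : Measure E) [IsProbabilityMeasure μ] : Nonempty E := by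
  by_contra h
  rw [not_nonempty_iff] at h
  exact IsProbabilityMeasure.ne_zero μ (Measure.eq_zero_of_isEmpty μ)

lemma lint_edist (hI : ∀ x₀ : E, Integrable (fun x => dist x x₀) μ) (x₀ : E) :
    ∫⁻ x, edist x₀ x ∂μ ≠ ∞ := by
  have h1 := (hasFiniteIntegral_iff_norm _).1 (hI x₀).2
  simp only [Real.norm_eq_abs, abs_of_nonneg dist_nonneg, ← edist_dist] at h1
  simp_rw [edist_comm x₀]
  exact h1.ne

lemma exists_simple (hI : ∀ x₀ : E, Integrable (fun x => dist x x₀) μ) {δ : ℝ} (hδ : 0 < δ) :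
    ∃ φ : SimpleFunc E E, ∫⁻ x, edist (φ x) x ∂μ ≤ ENNReal.ofReal δ := by
  obtain ⟨x₀⟩ := nonempty_of_prob μ
  let φ : ℕ → SimpleFunc E E := fun k =>
    SimpleFunc.approxOn id measurable_id Set.univ x₀ (Set.mem_univ _) k
  have h1 : Tendsto (fun k => ∫⁻ x, edist (φ k x) x ∂μ) atTop (nhds (∫⁻ x, (0 : ℝ≥0∞) ∂μ)) := by
    apply tendsto_lintegral_of_dominated_convergence (fun x => edist x₀ x)
    · intro k
      exact (φ k).measurable.edist measurable_id
    · intro k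
      filter_upwards with x
      exact SimpleFunc.edist_approxOn_le measurable_id (Set.mem_univ _) x k
    · exact lint_edist hI x₀
    · filter_upwards with x
      have := SimpleFunc.tendsto_approxOn (measurable_id (α := E)) (Set.mem_univ x₀) (x := x) (by simp)
      have h2 := this.edist (tendsto_const_nhds (x := x))
      simpa using h2
  rw [lintegral_zero] at h1
  have h2 := h1.eventually (ge_mem_nhds (ENNReal.ofReal_pos.2 hδ))
  obtain ⟨k, hk⟩ := h2.exists
  exact ⟨φ k, hk⟩

lemma Wp_one_le {ν₁ ν₂ : Measure E} (γ : Measure (E × E)) (h1 : γ.map Prod.fst = ν₁)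
    (h2 : γ.map Prod.snd = ν₂) : Wp 1 ν₁ ν₂ ≤ ∫⁻ z, edist z.1 z.2 ∂γ := by
  unfold Wp
  refine (iInf₂_le γ ⟨h1, h2⟩).trans ?_
  simp

lemma Wp_one_symm_le (ν₁ ν₂ : Measure E) : Wp 1 ν₁ ν₂ ≤ Wp 1 ν₂ ν₁ := by
  conv_rhs => unfold Wp
  refine le_iInf₂ fun γ hγ => ?_
  refine (Wp_one_le (γ.map Prod.swap) ?_ ?_).trans ?_
  · rw [Measure.map_map measurable_fst measurable_swap]; exact hγ.2
  · rw [Measure.map_map measurable_snd measurable_swap]; exact hγ.1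
  · rw [lintegral_map (measurable_fst.edist measurable_snd) measurable_swap]
    simp [edist_comm]

lemma integral_empirical {m : ℕ} (X : Fin m → E) {f : E → ℝ} (hf : Continuous f) :
    Integrable f (empiricalMeasure m X) ∧
      ∫ x, f x ∂(empiricalMeasure m X) = (m : ℝ)⁻¹ * ∑ i, f (X i) := by
  unfold empiricalMeasure
  have h1 : ∀ i ∈ (Finset.univ : Finset (Fin m)), Integrable f (Measure.dirac (X i)) := fun i _ =>
    integrable_dirac (by simp)
  rcases Nat.eq_zero_or_pos m with rfl | hm
  · simp
  constructor
  · apply Integrable.smul_measure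
    · exact integrable_finsetSum_measure.2 h1
    · simp; omega
  · rw [integral_smul_measure, integral_finsetSum_measure h1]
    simp [integral_dirac]

lemma KD_lower (hI : ∀ x₀ : E, Integrable (fun x => dist x x₀) μ) {m : ℕ} (hm : 0 < m)
    (X : Fin m → E) :
    ENNReal.ofReal (Sd μ Finset.univ X / m) ≤ Wp 1 (empiricalMeasure m X) μ := by
  unfold Wp
  refine le_iInf₂ fun γ hγ => ?_
  simp only [ENNReal.rpow_one, one_div, inv_one]
  by_cases htop : ∫⁻ z, edist z.1 z.2 ∂γ = ∞
  · rw [htop]; exact le_top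
  have hdm : Measurable (fun z : E × E => edist z.1 z.2) := measurable_fst.edist measurable_snd
  have hdint : Integrable (fun z : E × E => dist z.1 z.2) γ := by
    refine ⟨(measurable_fst.dist measurable_snd).aestronglyMeasurable, ?_⟩
    rw [hasFiniteIntegral_iff_norm]
    simp only [Real.norm_eq_abs, abs_of_nonneg dist_nonneg, ← edist_dist]
    exact lt_top_iff_ne_top.2 htop
  have hval : ∫⁻ z, edist z.1 z.2 ∂γ = ENNReal.ofReal (∫ z, dist z.1 z.2 ∂γ) := by
    rw [ofReal_integral_eq_lintegral_ofReal hdint (by filter_upwards with z using dist_nonneg)]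
    simp_rw [edist_dist]
  rw [hval]
  apply ENNReal.ofReal_le_ofReal
  have hm' : (0 : ℝ) < m := by exact_mod_cast hm
  rw [div_le_iff₀ hm']
  apply Sd_le
  intro f hf
  have h1 : Integrable (fun z : E × E => f z.1) γ := by
    have := (integral_empirical X hf.continuous).1
    rw [← hγ.1] at this
    exact this.comp_measurable measurable_fst
  have h2 : Integrable (fun z : E × E => f z.2) γ := by
    have := lip_integrable hI hf
    rw [← hγ.2] at this
    exact this.comp_measurable measurable_snd
  have h3 : ∫ z, f z.1 ∂γ = (m : ℝ)⁻¹ * ∑ i, f (X i) := by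
    rw [← (integral_empirical X hf.continuous).2, ← hγ.1, integral_map measurable_fst.aemeasurable]
    exact hf.continuous.aestronglyMeasurable
  have h4 : ∫ z, f z.2 ∂γ = ∫ y, f y ∂μ := by
    rw [← hγ.2, integral_map measurable_snd.aemeasurable]
    exact hf.continuous.aestronglyMeasurable
  have h5 : ∫ z, (f z.1 - f z.2) ∂γ ≤ ∫ z, dist z.1 z.2 ∂γ := by
    apply integral_mono (h1.sub h2) hdint
    intro z
    have h1 := hf.dist_le_mul z.1 z.2
    rw [Real.dist_eq] at h1
    have h2 := le_abs_self (f z.1 - f z.2)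
    simp at h1 ⊢
    linarith
  rw [integral_sub h1 h2, h3, h4] at h5
  rw [Finset.sum_sub_distrib]
  simp only [Finset.sum_const, Finset.card_univ, Fintype.card_fin, nsmul_eq_mul]
  have h6 := mul_le_mul_of_nonneg_right h5 hm'.le
  rw [sub_mul, mul_assoc, mul_comm _ (m : ℝ), ← mul_assoc, inv_mul_cancel₀ hm'.ne', one_mul] at h6
  linarith

lemma KD_upper (hI : ∀ x₀ : E, Integrable (fun x => dist x x₀) μ) {m : ℕ} (hm : 0 < m)
    (X : Fin m → E) :
    Wp 1 (empiricalMeasure m X) μ ≤ ENNReal.ofReal (Sd μ Finset.univ X / m) := by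
  classical
  have hm' : (0 : ℝ) < m := by exact_mod_cast hm
  set w := Sd μ Finset.univ X / m with hw
  have hw0 : 0 ≤ w := div_nonneg (Sd_nonneg hI _ _) hm'.le
  apply ENNReal.le_of_forall_pos_le_add
  intro ε hε _
  obtain ⟨φ, hφ⟩ := exists_simple hI (δ := ε / 2) (by positivity)
  set δ : ℝ := ε / 2 with hδ
  have hδ0 : 0 < δ := by positivity
  have hφint : Integrable (fun x => dist (φ x) x) μ := by
    refine ⟨(φ.measurable.dist measurable_id).aestronglyMeasurable, ?_⟩
    rw [hasFiniteIntegral_iff_norm]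
    simp only [Real.norm_eq_abs, abs_of_nonneg dist_nonneg, ← edist_dist]
    exact hφ.trans_lt ofReal_lt_top
  have hφr : ∫ x, dist (φ x) x ∂μ ≤ δ := by
    rw [← ENNReal.ofReal_le_ofReal_iff hδ0.le,
      ofReal_integral_eq_lintegral_ofReal hφint (by filter_upwards with z using dist_nonneg)]
    simp_rw [← edist_dist]
    exact hφ
  let P : φ.range → ℝ≥0∞ := fun y => μ (φ ⁻¹' {y.1})
  have hPtop : ∀ y, P y ≠ ∞ := fun y => measure_ne_top _ _
  have hsumint : ∀ g : E → ℝ, ∑ y : φ.range, (P y).toReal * g y.1 = ∫ x, g (φ x) ∂μ := by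
    intro g
    have h1 : (fun x => g (φ x)) =
        fun x => ∑ y : φ.range, (φ ⁻¹' {y.1}).indicator (fun _ => g y.1) x := by
      funext x
      rw [Finset.sum_eq_single (⟨φ x, φ.mem_range_self x⟩ : φ.range)]
      · simp
      · intro y _ hy
        rw [Set.indicator_of_notMem]
        intro hx
        apply hy
        ext
        exact (hx : φ x = y.1).symm
      · simp
    rw [h1, integral_finsetSum]
    · apply Finset.sum_congr rfl
      intro y _
      rw [integral_indicator_const _ (φ.measurableSet_fiber _)]
      rfl
    · intro y _
      exact (integrable_const _).indicator (φ.measurableSet_fiber _)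
  have hP1 : ∑ y : φ.range, (P y).toReal = 1 := by
    have := hsumint (fun _ => 1)
    simpa using this
  obtain ⟨π, hπ0, hπ1, hπ2, hπ3⟩ := finite_duality X (fun y : φ.range => y.1)
    (fun _ => (m : ℝ)⁻¹) (fun y => (P y).toReal) (fun _ => by positivity)
    (fun _ => ENNReal.toReal_nonneg) (by simp; field_simp) hP1 (w + δ) (by
      intro f hf
      rw [hsumint f]
      have h1 := le_Sd hI Finset.univ X hf
      rw [Finset.sum_sub_distrib] at h1
      simp only [Finset.sum_const, Finset.card_univ, Fintype.card_fin, nsmul_eq_mul] at h1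
      have h2 : (m : ℝ)⁻¹ * ∑ i, f (X i) - ∫ y, f y ∂μ ≤ w := by
        rw [hw, le_div_iff₀ hm', sub_mul, mul_assoc, mul_comm _ (m : ℝ), ← mul_assoc,
          inv_mul_cancel₀ hm'.ne', one_mul]
        linarith
      have hi1 := lip_integrable hI hf
      have hi2 : Integrable (fun x => f (φ x)) μ :=
        SimpleFunc.integrable_of_isFiniteMeasure (φ.map f)
      have h3 : ∫ x, (f x - f (φ x)) ∂μ ≤ ∫ x, dist (φ x) x ∂μ := by
        apply integral_mono (hi1.sub hi2) hφint
        intro x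
        have h1 := hf.dist_le_mul (φ x) x
        rw [Real.dist_eq] at h1
        have h2 := neg_abs_le (f (φ x) - f x)
        simp at h1 ⊢
        linarith
      rw [integral_sub hi1 hi2] at h3
      rw [← Finset.mul_sum]
      linarith)
  let c : Fin m → φ.range → ℝ≥0∞ := fun s y => ENNReal.ofReal (π s y) / P y
  have hcP : ∀ s y, c s y * P y = ENNReal.ofReal (π s y) := by
    intro s y
    by_cases h : P y = 0
    · have h1 : π s y ≤ ∑ s, π s y :=
        Finset.single_le_sum (f := fun s => π s y) (fun s _ => hπ0 s y) (Finset.mem_univ s)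
      rw [hπ2 y, h] at h1
      have : π s y = 0 := le_antisymm (by simpa using h1) (hπ0 s y)
      simp [c, h, this]
    · exact ENNReal.div_mul_cancel h (hPtop y)
  have hcsum : ∀ y, P y ≠ 0 → ∑ s, c s y = 1 := by
    intro y hy
    simp only [c, ENNReal.div_eq_inv_mul]
    rw [← Finset.mul_sum, ← ENNReal.ofReal_sum_of_nonneg (fun s _ => hπ0 s y), hπ2 y,
      ENNReal.ofReal_toReal (hPtop y), ENNReal.inv_mul_cancel hy (hPtop y)]
  let R : φ.range → Measure E := fun y => μ.restrict (φ ⁻¹' {y.1})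
  have hR0 : ∀ y, P y = 0 → R y = 0 := fun y hy => Measure.restrict_eq_zero.2 hy
  have hRu : ∀ y, R y Set.univ = P y := fun y => by simp [R, P]
  have hRsum : ∑ y, R y = μ := by
    ext A hA
    rw [Measure.finsetSum_apply]
    simp only [R, Measure.restrict_apply hA]
    rw [← measure_biUnion_finset]
    · congr 1
      ext x; simp
    · intro y _ y' _ hyy
      apply Set.disjoint_left.2
      rintro x ⟨_, hx1⟩ ⟨_, hx2⟩
      apply hyy
      ext
      exact hx1.symm.trans hx2
    · intro y _
      exact hA.inter (φ.measurableSet_fiber _)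
  have hcR : ∀ y, (∑ s, c s y) • R y = R y := by
    intro y
    by_cases h : P y = 0
    · rw [hR0 y h, smul_zero]
    · rw [hcsum y h, one_smul]
  let γ : Measure (E × E) := ∑ s, ∑ y, c s y • (Measure.dirac (X s)).prod (R y)
  refine (Wp_one_le γ ?_ ?_).trans ?_
  · ext A hA
    rw [Measure.map_apply measurable_fst hA]
    simp only [γ, Measure.finsetSum_apply, Measure.smul_apply, empiricalMeasure]
    have : ∀ s y, (Measure.dirac (X s)).prod (R y) (Prod.fst ⁻¹' A) = Measure.dirac (X s) A * P y := by
      intro s y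
      rw [← Set.prod_univ, Measure.prod_prod, hRu]
    simp_rw [this, smul_eq_mul]
    rw [Finset.mul_sum]
    apply Finset.sum_congr rfl
    intro s _
    have : ∀ y, c s y * (Measure.dirac (X s) A * P y) =
        ENNReal.ofReal (π s y) * Measure.dirac (X s) A := fun y => by
      rw [← hcP s y]; ring
    simp_rw [this]
    rw [← Finset.sum_mul, ← ENNReal.ofReal_sum_of_nonneg (fun y _ => hπ0 s y), hπ1 s,
      ENNReal.ofReal_inv_of_pos hm', ENNReal.ofReal_natCast]
  · ext A hA
    rw [Measure.map_apply measurable_snd hA]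
    simp only [γ, Measure.finsetSum_apply, Measure.smul_apply]
    have : ∀ s y, (Measure.dirac (X s)).prod (R y) (Prod.snd ⁻¹' A) = R y A := by
      intro s y
      rw [← Set.univ_prod, Measure.prod_prod]; simp
    simp_rw [this, smul_eq_mul]
    rw [Finset.sum_comm]
    conv_rhs => rw [← hRsum, Measure.finsetSum_apply]
    apply Finset.sum_congr rfl
    intro y _
    conv_rhs => rw [← hcR y]
    rw [← Finset.sum_mul]; rfl
  · have hdm : Measurable (fun z : E × E => edist z.1 z.2) := measurable_fst.edist measurable_snd
    simp only [γ, lintegral_finsetSum_measure, lintegral_smul_measure, smul_eq_mul]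
    have h1 : ∀ s y, ∫⁻ z, edist z.1 z.2 ∂((Measure.dirac (X s)).prod (R y)) ≤
        P y * edist (X s) y.1 + ∫⁻ x in φ ⁻¹' {y.1}, edist (φ x) x ∂μ := by
      intro s y
      rw [lintegral_prod _ hdm.aemeasurable, lintegral_dirac' _ hdm.lintegral_prod_right']
      calc ∫⁻ x, edist (X s) x ∂(R y)
          ≤ ∫⁻ x in φ ⁻¹' {y.1}, (edist (X s) y.1 + edist (φ x) x) ∂μ := by
            apply setLIntegral_mono' (φ.measurableSet_fiber _)
            intro x hx
            have hx : φ x = y.1 := hx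
            rw [hx]
            exact edist_triangle _ _ _
        _ = _ := by
            rw [lintegral_add_left measurable_const]
            simp [P, mul_comm]
    calc ∑ s, ∑ y, c s y * ∫⁻ z, edist z.1 z.2 ∂((Measure.dirac (X s)).prod (R y))
        ≤ ∑ s, ∑ y, (ENNReal.ofReal (π s y * dist (X s) y.1) +
            c s y * ∫⁻ x in φ ⁻¹' {y.1}, edist (φ x) x ∂μ) := by
          apply Finset.sum_le_sum; intro s _
          apply Finset.sum_le_sum; intro y _
          refine (mul_le_mul_right (h1 s y) (c s y)).trans ?_
          rw [mul_add, ← mul_assoc, hcP, ENNReal.ofReal_mul (hπ0 s y), ← edist_dist]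
      _ = ENNReal.ofReal (∑ s, ∑ y, π s y * dist (X s) y.1) + ∑ y, ∫⁻ x, edist (φ x) x ∂(R y) := by
          simp_rw [Finset.sum_add_distrib]
          congr 1
          · rw [ENNReal.ofReal_sum_of_nonneg]
            · apply Finset.sum_congr rfl; intro s _
              rw [ENNReal.ofReal_sum_of_nonneg]
              exact fun y _ => mul_nonneg (hπ0 s y) dist_nonneg
            · exact fun s _ => Finset.sum_nonneg fun y _ => mul_nonneg (hπ0 s y) dist_nonneg
          · rw [Finset.sum_comm]
            apply Finset.sum_congr rfl; intro y _
            rw [← Finset.sum_mul]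
            conv_rhs => rw [← hcR y, lintegral_smul_measure]
            rfl
      _ ≤ ENNReal.ofReal (w + δ) + ENNReal.ofReal δ := by
          gcongr
          rw [← lintegral_finsetSum_measure, hRsum]
          exact hφ
      _ = ENNReal.ofReal w + ε := by
          rw [← ENNReal.ofReal_add (by positivity) hδ0.le, add_assoc, hδ, add_halves,
            ENNReal.ofReal_add hw0 (by positivity)]
          simp

end kd

section lower
set_option linter.unusedSectionVars false

/-- sign of a boolean -/
noncomputable def sgb (b : Bool) : ℝ := if b then 1 else -1

lemma sgb_abs (b : Bool) : |sgb b| = 1 := by cases b <;> simp [sgb]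

lemma rad_orth {r : ℕ} (k l : Fin r) :
    ∑ s : Fin r → Bool, sgb (s k) * sgb (s l) = if k = l then (2 : ℝ) ^ r else 0 := by
  classical
  split_ifs with h
  · subst h
    have : ∀ s : Fin r → Bool, sgb (s k) * sgb (s k) = 1 := fun s => by
      cases s k <;> simp [sgb]
    simp [this]
  · apply Finset.sum_involution (fun s _ => Function.update s k (!(s k)))
    · intro s _
      rw [Function.update_self, Function.update_of_ne (Ne.symm h)]
      cases s k <;> cases s l <;> simp [sgb]
    · intro s _ _ heq
      have := congrFun heq k
      simp at this
    · intro s _; simp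
    · intro s _; simp

lemma rad_exp {r : ℕ} (a : Fin r → ℝ) :
    ∑ s : Fin r → Bool, Real.exp (∑ l, sgb (s l) * a l) ≤
      2 ^ r * Real.exp ((∑ l, a l ^ 2) / 2) := by
  classical
  have h1 : ∑ s : Fin r → Bool, Real.exp (∑ l, sgb (s l) * a l) =
      ∏ l, ∑ b : Bool, Real.exp (sgb b * a l) := by
    rw [Finset.prod_univ_sum]
    simp only [Fintype.piFinset_univ, Real.exp_sum]
  rw [h1]
  have h2 : ∀ l, ∑ b : Bool, Real.exp (sgb b * a l) = 2 * Real.cosh (a l) := by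
    intro l
    rw [Real.cosh_eq]
    simp [sgb]
    ring
  simp_rw [h2]
  rw [Finset.prod_mul_distrib]
  simp only [Finset.prod_const, Finset.card_univ, Fintype.card_fin]
  rw [Finset.sum_div, Real.exp_sum]
  gcongr with l
  exact Real.cosh_le_exp_half_sq _

lemma rad_tail {r : ℕ} (a : Fin r → ℝ) (d L : ℝ) (hd : 0 ≤ d) (ha : ∀ l, |a l| ≤ d) (hL : 0 < L) :
    ((Finset.univ.filter fun s : Fin r → Bool => L * √r * d < ∑ l, sgb (s l) * a l).card : ℝ) ≤
      2 ^ r * Real.exp (-(L ^ 2 / 2)) := by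
  classical
  rcases hd.eq_or_lt with rfl | hd
  · have ha0 : ∀ l, a l = 0 := fun l => abs_eq_zero.1 (le_antisymm (ha l) (abs_nonneg _))
    simp [ha0]; positivity
  rcases Nat.eq_zero_or_pos r with rfl | hr
  · simp; positivity
  have hr' : (0 : ℝ) < r := by exact_mod_cast hr
  have hsq : (0 : ℝ) < √r := Real.sqrt_pos.2 hr'
  set η := L / (√r * d) with hη
  have hη0 : 0 < η := by positivity
  have h1 := rad_exp (fun l => η * a l)
  have h2 : (∑ l, (η * a l) ^ 2) / 2 ≤ L ^ 2 / 2 := by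
    have : ∑ l, (η * a l) ^ 2 ≤ ∑ l : Fin r, (η * d) ^ 2 := by
      apply Finset.sum_le_sum
      intro l _
      rw [mul_pow, mul_pow]
      gcongr ?_ * ?_
      exact sq_le_sq' (by linarith [neg_le_of_abs_le (ha l)]) (le_of_abs_le (ha l))
    have h3 : ∑ l : Fin r, (η * d) ^ 2 = L ^ 2 := by
      simp only [Finset.sum_const, Finset.card_univ, Fintype.card_fin, nsmul_eq_mul]
      rw [hη]
      have := Real.sq_sqrt hr'.le
      field_simp
      rw [this]
    linarith
  have h3 : ((Finset.univ.filter fun s : Fin r → Bool => L * √r * d < ∑ l, sgb (s l) * a l).card : ℝ)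
      * Real.exp (L ^ 2) ≤ ∑ s : Fin r → Bool, Real.exp (∑ l, sgb (s l) * (η * a l)) := by
    rw [← nsmul_eq_mul, ← Finset.sum_const]
    refine (Finset.sum_le_sum ?_).trans (Finset.sum_le_sum_of_subset_of_nonneg
      (Finset.subset_univ _) (fun _ _ _ => (Real.exp_pos _).le))
    intro s hs
    rw [Finset.mem_filter] at hs
    apply Real.exp_le_exp.2
    have h4 : ∑ l, sgb (s l) * (η * a l) = η * ∑ l, sgb (s l) * a l := by
      rw [Finset.mul_sum]; apply Finset.sum_congr rfl; intros; ring
    rw [h4]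
    calc L ^ 2 = η * (L * √r * d) := by rw [hη]; field_simp
      _ ≤ _ := by gcongr; exact hs.2.le
  have h5 : 2 ^ r * Real.exp ((∑ l, (η * a l) ^ 2) / 2) ≤ 2 ^ r * Real.exp (L ^ 2 / 2) := by
    gcongr
  have h6 := h3.trans (h1.trans h5)
  have h7 : Real.exp (L ^ 2) = Real.exp (L ^ 2 / 2) * Real.exp (L ^ 2 / 2) := by
    rw [← Real.exp_add]; ring_nf
  rw [Real.exp_neg, ← div_eq_mul_inv, le_div_iff₀ (Real.exp_pos _)]
  have h8 := Real.exp_pos (L ^ 2 / 2)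
  rw [h7, ← mul_assoc] at h6
  exact le_of_mul_le_mul_right h6 h8

variable {E : Type*} [MetricSpace E] [SecondCountableTopology E] [MeasurableSpace E] [BorelSpace E]
  {μ : Measure E} [IsProbabilityMeasure μ]

/-- union of blocks with sign `b` -/
noncomputable def selB {n r : ℕ} (B : Fin r → Finset (Fin n)) (s : Fin r → Bool) (b : Bool) :
    Finset (Fin n) := (Finset.univ.filter fun k => s k = b).biUnion B

lemma sel_sum {n r : ℕ} (B : Fin r → Finset (Fin n)) (hB : ∀ k l, k ≠ l → Disjoint (B k) (B l))
    (s : Fin r → Bool) (g : Fin n → ℝ) :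
    ∑ k, sgb (s k) * ∑ i ∈ B k, g i = ∑ i ∈ selB B s true, g i - ∑ i ∈ selB B s false, g i := by
  classical
  unfold selB
  rw [Finset.sum_biUnion (fun k _ l _ h => hB k l h), Finset.sum_biUnion (fun k _ l _ h => hB k l h),
    Finset.sum_filter, Finset.sum_filter, ← Finset.sum_sub_distrib]
  apply Finset.sum_congr rfl
  intro k _
  cases s k <;> simp [sgb]

lemma lower_pointwise (hI : ∀ x₀ : E, Integrable (fun x => dist x x₀) μ) {n r : ℕ} (hn : 1 ≤ n)
    (hr : 1 ≤ r) (hrn : r ≤ n)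
    (B : Fin r → Finset (Fin n)) (hB : ∀ k l, k ≠ l → Disjoint (B k) (B l))
    (X X' : Fin n → E) (f : Fin r → E → ℝ) (hf : ∀ l, LipschitzWith 1 (f l)) :
    ∑ l, (∑ i ∈ B l, (f l (X i) - ∫ y, f l y ∂μ) - ∑ i ∈ B l, (f l (X' i) - ∫ y, f l y ∂μ)) ≤
      √(8 * Real.log (2 * n)) * √r * ((2 ^ r)⁻¹ * ∑ s : Fin r → Bool,
        ((Sd μ (selB B s true) X + Sd μ (selB B s false) X) +
          (Sd μ (selB B s true) X' + Sd μ (selB B s false) X'))) +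
      (4 * n : ℝ)⁻¹ * ∑ k, (Sd μ (B k) X + Sd μ (B k) X') := by
  classical
  set L := √(8 * Real.log (2 * n)) with hLdef
  have hn' : (1 : ℝ) ≤ n := by exact_mod_cast hn
  have hlog : 0 < Real.log (2 * n) := Real.log_pos (by linarith)
  have hL : 0 < L := Real.sqrt_pos.2 (by linarith)
  have hr' : (0 : ℝ) < r := by exact_mod_cast hr
  have hsr : 0 < √(r : ℝ) := Real.sqrt_pos.2 hr'
  let D : Fin r → Fin r → ℝ := fun k l => ∑ i ∈ B k, (f l (X i) - f l (X' i))
  let H : (Fin r → Bool) → ℝ := fun s => ((Sd μ (selB B s true) X + Sd μ (selB B s false) X) +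
          (Sd μ (selB B s true) X' + Sd μ (selB B s false) X'))
  have hH : ∀ s, 0 ≤ H s := fun s => by
    have := Sd_nonneg hI (selB B s true) X
    have := Sd_nonneg hI (selB B s false) X
    have := Sd_nonneg hI (selB B s true) X'
    have := Sd_nonneg hI (selB B s false) X'
    simp only [H]; linarith
  let V : ℝ := ∑ k, (Sd μ (B k) X + Sd μ (B k) X')
  have hneg : ∀ {g : E → ℝ} {K : NNReal}, LipschitzWith K g → LipschitzWith K (fun x => - g x) :=
    fun hg => hg.neg
  have hD : ∀ k l, |D k l| ≤ Sd μ (B k) X + Sd μ (B k) X' := by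
    intro k l
    have e1 := le_Sd hI (B k) X (hf l)
    have e2 := le_Sd hI (B k) X' (hneg (hf l))
    have e3 := le_Sd hI (B k) X (hneg (hf l))
    have e4 := le_Sd hI (B k) X' (hf l)
    simp only [integral_neg, Finset.sum_sub_distrib, Finset.sum_neg_distrib, D] at *
    rw [abs_le]; constructor <;> linarith
  have hV0 : 0 ≤ V := Finset.sum_nonneg fun k _ => (abs_nonneg _).trans (hD k ⟨0, hr⟩)
  let F : (Fin r → Bool) → E → ℝ := fun s x => ∑ l, sgb (s l) * f l x
  let Q : (Fin r → Bool) → ℝ := fun s => ∑ k, ∑ l, sgb (s k) * sgb (s l) * D k l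
  have hQsum : ∑ s, Q s = 2 ^ r * ∑ l, D l l := by
    simp only [Q]
    rw [Finset.sum_comm, Finset.mul_sum]
    apply Finset.sum_congr rfl
    intro k _
    rw [Finset.sum_comm]
    simp_rw [← Finset.sum_mul, rad_orth]
    simp
  have hQF : ∀ s, Q s = ∑ k, sgb (s k) * ∑ i ∈ B k, (F s (X i) - F s (X' i)) := by
    intro s
    simp only [Q, D, F]
    apply Finset.sum_congr rfl
    intro k _
    simp_rw [mul_assoc]
    rw [← Finset.mul_sum]
    congr 1
    simp_rw [← Finset.sum_sub_distrib, ← mul_sub, Finset.mul_sum]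
    rw [Finset.sum_comm]
  let pt : Fin n ⊕ Fin n → E := Sum.elim X X'
  let badp : (Fin n ⊕ Fin n) × (Fin n ⊕ Fin n) → Finset (Fin r → Bool) := fun p =>
    Finset.univ.filter fun s => L * √r * dist (pt p.1) (pt p.2) <
      ∑ l, sgb (s l) * (f l (pt p.1) - f l (pt p.2))
  let bad : Finset (Fin r → Bool) := Finset.univ.biUnion badp
  have hbadcard : (bad.card : ℝ) * r ≤ 2 ^ r * (4 * n : ℝ)⁻¹ := by
    have h1 : (bad.card : ℝ) ≤ ∑ p, ((badp p).card : ℝ) := by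
      exact_mod_cast Finset.card_biUnion_le
    have h2 : ∀ p, ((badp p).card : ℝ) ≤ 2 ^ r * Real.exp (-(L ^ 2 / 2)) := by
      intro p
      apply rad_tail _ _ _ dist_nonneg _ hL
      intro l
      have := (hf l).dist_le_mul (pt p.1) (pt p.2)
      rw [Real.dist_eq] at this
      simpa using this
    have h3 : Real.exp (-(L ^ 2 / 2)) = ((2 * n : ℝ) ^ 4)⁻¹ := by
      rw [hLdef, Real.sq_sqrt (by linarith), Real.exp_neg]
      congr 1
      rw [show 8 * Real.log (2 * n) / 2 = (4 : ℕ) * Real.log (2 * n) by push_cast; ring,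
        Real.exp_nat_mul, Real.exp_log (by linarith)]
    have h4 : (bad.card : ℝ) ≤ (2 * n) ^ 2 * (2 ^ r * ((2 * n : ℝ) ^ 4)⁻¹) := by
      refine h1.trans ((Finset.sum_le_sum fun p _ => h2 p).trans ?_)
      rw [h3]
      simp
      apply le_of_eq; ring
    have hrn' : (r : ℝ) ≤ n := by exact_mod_cast hrn
    calc (bad.card : ℝ) * r ≤ ((2 * n) ^ 2 * (2 ^ r * ((2 * n : ℝ) ^ 4)⁻¹)) * n := by gcongr
      _ = _ := by
        have : (n : ℝ) ≠ 0 := by linarith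
        field_simp
        ring
  have hgood : ∀ s, s ∉ bad → Q s ≤ L * √r * H s := by
    intro s hs
    have hs' : ∀ p q, F s (pt p) - F s (pt q) ≤ L * √r * dist (pt p) (pt q) := by
      intro p q
      by_contra hcon
      apply hs
      simp only [bad, Finset.mem_biUnion, Finset.mem_univ, true_and]
      refine ⟨(p, q), ?_⟩
      simp only [badp, Finset.mem_filter, Finset.mem_univ, true_and]
      push Not at hcon
      simpa [F, mul_sub, Finset.sum_sub_distrib] using hcon
    let K : NNReal := ⟨L * √r, by positivity⟩
    have hK : 0 < K := by
      have : 0 < L * √r := by positivity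
      exact this
    have hlip : LipschitzOnWith K (F s) (Set.range pt) := by
      apply LipschitzOnWith.of_dist_le_mul
      rintro _ ⟨p, rfl⟩ _ ⟨q, rfl⟩
      rw [Real.dist_eq, abs_le]
      have e1 := hs' p q
      have e2 := hs' q p
      rw [dist_comm (pt q)] at e2
      have : (K : ℝ) = L * √r := rfl
      rw [this]
      constructor <;> linarith
    obtain ⟨g, hg, hgeq⟩ := hlip.extend_real
    have hX : ∀ i, F s (X i) = g (X i) := fun i => hgeq ⟨Sum.inl i, rfl⟩
    have hX' : ∀ i, F s (X' i) = g (X' i) := fun i => hgeq ⟨Sum.inr i, rfl⟩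
    rw [hQF]
    simp_rw [hX, hX']
    rw [sel_sum B hB]
    have e1 := le_Sd_mul hI (selB B s true) X hK hg
    have e2 := le_Sd_mul hI (selB B s false) X hK (hneg hg)
    have e3 := le_Sd_mul hI (selB B s true) X' hK (hneg hg)
    have e4 := le_Sd_mul hI (selB B s false) X' hK hg
    have : (K : ℝ) = L * √r := rfl
    rw [this] at e1 e2 e3 e4
    simp only [integral_neg, Finset.sum_sub_distrib, Finset.sum_neg_distrib, H, mul_add] at *
    linarith
  have hbad : ∀ s, Q s ≤ r * V := by
    intro s
    have : Q s ≤ ∑ k, ∑ l : Fin r, (Sd μ (B k) X + Sd μ (B k) X') := by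
      apply Finset.sum_le_sum; intro k _
      apply Finset.sum_le_sum; intro l _
      refine (le_abs_self _).trans ?_
      rw [abs_mul, abs_mul, sgb_abs, sgb_abs, one_mul, one_mul]
      exact hD k l
    refine this.trans (le_of_eq ?_)
    simp [V, Finset.mul_sum, mul_add]
  have htot : ∑ s, Q s ≤ L * √r * ∑ s, H s + bad.card * (r * V) := by
    rw [← Finset.sum_add_sum_compl bad Q, Finset.mul_sum, add_comm]
    apply add_le_add
    · refine (Finset.sum_le_sum fun s hs => hgood s (Finset.mem_compl.1 hs)).trans ?_
      apply Finset.sum_le_sum_of_subset_of_nonneg (Finset.subset_univ _)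
      intro s _ _
      have := hH s
      positivity
    · refine (Finset.sum_le_sum fun s _ => hbad s).trans ?_
      simp
  rw [hQsum] at htot
  have h2r : (0 : ℝ) < 2 ^ r := by positivity
  have hfin : ∑ l, D l l ≤ L * √r * ((2 ^ r)⁻¹ * ∑ s, H s) + (4 * n : ℝ)⁻¹ * V := by
    have h1 : (bad.card : ℝ) * (r * V) ≤ 2 ^ r * (4 * n : ℝ)⁻¹ * V := by
      rw [← mul_assoc]; gcongr
    have h2 : 2 ^ r * ∑ l, D l l ≤
        2 ^ r * (L * √r * ((2 ^ r)⁻¹ * ∑ s, H s) + (4 * n : ℝ)⁻¹ * V) := by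
      refine (htot.trans (add_le_add_right h1 _)).trans (le_of_eq ?_)
      field_simp
    exact le_of_mul_le_mul_left h2 h2r
  refine le_trans (le_of_eq ?_) hfin
  apply Finset.sum_congr rfl
  intro l _
  simp only [D, ← Finset.sum_sub_distrib]
  apply Finset.sum_congr rfl
  intros; ring

end lower

section lower2
set_option linter.unusedSectionVars false
variable {E : Type*} [MetricSpace E] [SecondCountableTopology E] [MeasurableSpace E] [BorelSpace E]
  {μ : Measure E} [IsProbabilityMeasure μ]

instance sampleMeasure_prob (n : ℕ) : IsProbabilityMeasure (sampleMeasure μ n) := by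
  unfold sampleMeasure; infer_instance

lemma Z_int (hI : ∀ x₀ : E, Integrable (fun x => dist x x₀) μ) {n : ℕ} (A : Finset (Fin n))
    {f : E → ℝ} (hf : LipschitzWith 1 f) :
    Integrable (fun X : Fin n → E => ∑ i ∈ A, (f (X i) - ∫ y, f y ∂μ)) (sampleMeasure μ n) ∧
    ∫ X : Fin n → E, ∑ i ∈ A, (f (X i) - ∫ y, f y ∂μ) ∂(sampleMeasure μ n) = 0 := by
  have hfi := lip_integrable hI hf
  have h1 : ∀ i, Integrable (fun X : Fin n → E => f (X i)) (sampleMeasure μ n) := fun i =>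
    (measurePreserving_eval (fun _ : Fin n => μ) i).integrable_comp_of_integrable hfi
  have h2 : ∀ i, Integrable (fun X : Fin n → E => f (X i) - ∫ y, f y ∂μ) (sampleMeasure μ n) :=
    fun i => (h1 i).sub (integrable_const _)
  refine ⟨integrable_finsetSum A fun i _ => h2 i, ?_⟩
  rw [integral_finsetSum A fun i _ => h2 i]
  apply Finset.sum_eq_zero
  intro i _
  rw [integral_sub (h1 i) (integrable_const _)]
  have : ∫ X : Fin n → E, f (X i) ∂(sampleMeasure μ n) = ∫ y, f y ∂μ := by
    have hm := (measurePreserving_eval (fun _ : Fin n => μ) i)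
    have := integral_map (μ := Measure.pi fun _ : Fin n => μ) (φ := Function.eval i) (f := f)
      hm.measurable.aemeasurable (by rw [hm.map_eq]; exact hfi.aestronglyMeasurable)
    rw [hm.map_eq] at this
    exact this.symm
  rw [this]; simp

lemma lower_int (hI : ∀ x₀ : E, Integrable (fun x => dist x x₀) μ) {n r : ℕ} (hn : 1 ≤ n)
    (hr : 1 ≤ r) (hrn : r ≤ n)
    (B : Fin r → Finset (Fin n)) (hB : ∀ k l, k ≠ l → Disjoint (B k) (B l)) :
    ∑ l, ∫ X, Sd μ (B l) X ∂(sampleMeasure μ n) ≤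
      √(8 * Real.log (2 * n)) * √r * (4 * ∫ X, Sd μ Finset.univ X ∂(sampleMeasure μ n)) +
      (4 * n : ℝ)⁻¹ * (2 * ∑ l, ∫ X, Sd μ (B l) X ∂(sampleMeasure μ n)) := by
  classical
  set L := √(8 * Real.log (2 * n)) with hLdef
  let S : Finset (Fin n) → ℝ := fun A => ∫ X, Sd μ A X ∂(sampleMeasure μ n)
  have hSi : ∀ A : Finset (Fin n), Integrable (fun X => Sd μ A X) (sampleMeasure μ n) :=
    fun A => Sd_integrable hI A
  have hSg : ∀ A, S A ≤ S Finset.univ := fun A => Sd_glue hI A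
  have e1 : ∀ (c : ℝ) (s : Fin r → Bool), Integrable (fun X' : Fin n → E =>
      (c + (Sd μ (selB B s true) X' + Sd μ (selB B s false) X'))) (sampleMeasure μ n) ∧
      ∫ X' : Fin n → E, (c + (Sd μ (selB B s true) X' + Sd μ (selB B s false) X'))
        ∂(sampleMeasure μ n) = c + (S (selB B s true) + S (selB B s false)) := by
    intro c s
    refine ⟨(integrable_const _).add ((hSi _).add (hSi _)), ?_⟩
    have hsum : Integrable (fun X' : Fin n → E => Sd μ (selB B s true) X' + Sd μ (selB B s false) X')
      (sampleMeasure μ n) := (hSi _).add (hSi _)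
    rw [integral_add (integrable_const _) hsum, integral_add (hSi _) (hSi _)]
    simp [S]
  have e2 : ∀ (c : ℝ) (k : Fin r), Integrable (fun X' : Fin n → E =>
      (c + Sd μ (B k) X')) (sampleMeasure μ n) ∧
      ∫ X' : Fin n → E, (c + Sd μ (B k) X') ∂(sampleMeasure μ n) = c + S (B k) := by
    intro c k
    refine ⟨(integrable_const _).add (hSi _), ?_⟩
    rw [integral_add (integrable_const _) (hSi _)]
    simp [S]
  -- the integrated right side
  have e3 : ∀ (c : (Fin r → Bool) → ℝ) (d : Fin r → ℝ), Integrable (fun X' : Fin n → E =>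
      L * √r * ((2 ^ r)⁻¹ * ∑ s : Fin r → Bool,
        (c s + (Sd μ (selB B s true) X' + Sd μ (selB B s false) X'))) +
      (4 * n : ℝ)⁻¹ * ∑ k, (d k + Sd μ (B k) X')) (sampleMeasure μ n) ∧
      ∫ X' : Fin n → E, (L * √r * ((2 ^ r)⁻¹ * ∑ s : Fin r → Bool,
        (c s + (Sd μ (selB B s true) X' + Sd μ (selB B s false) X'))) +
      (4 * n : ℝ)⁻¹ * ∑ k, (d k + Sd μ (B k) X')) ∂(sampleMeasure μ n) =
      L * √r * ((2 ^ r)⁻¹ * ∑ s : Fin r → Bool,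
        (c s + (S (selB B s true) + S (selB B s false)))) +
      (4 * n : ℝ)⁻¹ * ∑ k, (d k + S (B k)) := by
    intro c d
    have i1 := integrable_finsetSum (Finset.univ : Finset (Fin r → Bool)) fun s _ => (e1 (c s) s).1
    have i2 := integrable_finsetSum (Finset.univ : Finset (Fin r)) fun s _ => (e2 (d s) s).1
    have i3 := (i1.const_mul (2 ^ r)⁻¹).const_mul (L * √r)
    have i4 := i2.const_mul (4 * n : ℝ)⁻¹
    refine ⟨i3.add i4, ?_⟩
    rw [integral_add i3 i4, integral_const_mul, integral_const_mul, integral_const_mul,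
      integral_finsetSum _ fun s _ => (e1 (c s) s).1, integral_finsetSum _ fun s _ => (e2 (d s) s).1]
    simp_rw [fun s => (e1 (c s) s).2, fun s => (e2 (d s) s).2]
  have h1 : ∀ X : Fin n → E, ∀ f : Fin r → E → ℝ, (∀ l, LipschitzWith 1 (f l)) →
      ∑ l, ∑ i ∈ B l, (f l (X i) - ∫ y, f l y ∂μ) ≤
      L * √r * ((2 ^ r)⁻¹ * ∑ s : Fin r → Bool,
        ((Sd μ (selB B s true) X + Sd μ (selB B s false) X) +
          (S (selB B s true) + S (selB B s false)))) +
      (4 * n : ℝ)⁻¹ * ∑ k, (Sd μ (B k) X + S (B k)) := by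
    intro X f hf
    have i1 : ∀ l, Integrable (fun X' : Fin n → E => (∑ i ∈ B l, (f l (X i) - ∫ y, f l y ∂μ)) -
        ∑ i ∈ B l, (f l (X' i) - ∫ y, f l y ∂μ)) (sampleMeasure μ n) := fun l =>
      (integrable_const _).sub (Z_int hI (B l) (hf l)).1
    have := integral_mono (integrable_finsetSum Finset.univ fun l _ => i1 l) (e3 _ _).1
      (fun X' => lower_pointwise hI hn hr hrn B hB X X' f hf)
    rw [(e3 _ _).2, integral_finsetSum _ fun l _ => i1 l] at this
    refine le_trans (le_of_eq ?_) this
    apply Finset.sum_congr rfl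
    intro l _
    rw [integral_sub (integrable_const _) (Z_int hI (B l) (hf l)).1, (Z_int hI (B l) (hf l)).2]
    simp
  have h2 : ∀ X : Fin n → E, ∑ l, Sd μ (B l) X ≤
      L * √r * ((2 ^ r)⁻¹ * ∑ s : Fin r → Bool,
        ((S (selB B s true) + S (selB B s false)) +
        (Sd μ (selB B s true) X + Sd μ (selB B s false) X))) +
      (4 * n : ℝ)⁻¹ * ∑ k, (S (B k) + Sd μ (B k) X) := by
    intro X
    apply _root_.le_of_forall_pos_le_add
    intro ε hε
    have hr' : (0 : ℝ) < r := by exact_mod_cast hr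
    have : ∀ l, ∃ f : E → ℝ, LipschitzWith 1 f ∧
        Sd μ (B l) X - ε / r < ∑ i ∈ B l, (f (X i) - ∫ y, f y ∂μ) := by
      intro l
      have hlt : Sd μ (B l) X - ε / r < Sd μ (B l) X := by
        have : 0 < ε / r := by positivity
        linarith
      obtain ⟨f, hf⟩ := exists_lt_of_lt_ciSup hlt
      exact ⟨f.1, f.2, hf⟩
    choose f hf hf2 using this
    have h3 := h1 X f hf
    have h4 : ∑ l, (Sd μ (B l) X - ε / r) ≤ ∑ l, ∑ i ∈ B l, (f l (X i) - ∫ y, f l y ∂μ) :=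
      Finset.sum_le_sum fun l _ => (hf2 l).le
    rw [Finset.sum_sub_distrib] at h4
    have h5 : ∑ l : Fin r, ε / r = ε := by simp; field_simp
    rw [h5] at h4
    simp_rw [add_comm (S (selB B _ true) + S (selB B _ false)), add_comm (S (B _))]
    linarith
  have h3 := integral_mono (integrable_finsetSum Finset.univ fun l _ => hSi (B l)) (e3 _ _).1 h2
  rw [(e3 _ _).2, integral_finsetSum _ fun l _ => hSi (B l)] at h3
  refine h3.trans ?_
  gcongr ?_ + ?_
  · refine mul_le_mul_of_nonneg_left ?_ (by positivity)
    rw [inv_mul_le_iff₀ (by positivity)]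
    calc _ ≤ ∑ s : Fin r → Bool, 4 * S Finset.univ := by
          apply Finset.sum_le_sum
          intro s _
          have := hSg (selB B s true)
          have := hSg (selB B s false)
          linarith
      _ = _ := by simp [S]
  · apply le_of_eq
    rw [Finset.sum_add_distrib, two_mul]

/-- quantization error is bounded by the restricted discrepancy. -/
lemma b_le_Sd (hI : ∀ x₀ : E, Integrable (fun x => dist x x₀) μ) {n m : ℕ} (hm : 0 < m)
    (A : Finset (Fin n)) (hA : A.card = m) (X : Fin n → E) :
    unifQuantErr 1 m μ ≤ ENNReal.ofReal (Sd μ A X / m) := by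
  unfold unifQuantErr
  refine (iInf_le _ (fun i => X (A.orderEmbOfFin hA i))).trans ?_
  refine (Wp_one_symm_le _ _).trans ((KD_upper hI hm _).trans (le_of_eq ?_))
  congr 2
  unfold Sd
  congr 1
  ext f
  rw [← Finset.sum_image (s := Finset.univ) (g := A.orderEmbOfFin hA)
    (f := fun s => (f.1 (X s) - ∫ y, f.1 y ∂μ))]
  · congr 1
    ext i
    simp
  · intro a _ b _ h; exact (A.orderEmbOfFin hA).injective h

lemma b_ne_top (hI : ∀ x₀ : E, Integrable (fun x => dist x x₀) μ) {m : ℕ} (hm : 0 < m) :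
    unifQuantErr 1 m μ ≠ ∞ := by
  obtain ⟨x₀⟩ := nonempty_of_prob μ
  exact ne_top_of_le_ne_top ENNReal.ofReal_ne_top
    (b_le_Sd hI hm (Finset.univ : Finset (Fin m)) (by simp) (fun _ => x₀))

lemma b_le_int (hI : ∀ x₀ : E, Integrable (fun x => dist x x₀) μ) {n m : ℕ} (hm : 0 < m)
    (A : Finset (Fin n)) (hA : A.card = m) :
    m * (unifQuantErr 1 m μ).toReal ≤ ∫ X, Sd μ A X ∂(sampleMeasure μ n) := by
  have hm' : (0 : ℝ) < m := by exact_mod_cast hm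
  have h : ∀ X, m * (unifQuantErr 1 m μ).toReal ≤ Sd μ A X := by
    intro X
    have := ENNReal.toReal_mono ENNReal.ofReal_ne_top (b_le_Sd hI hm A hA X)
    rw [ENNReal.toReal_ofReal (div_nonneg (Sd_nonneg hI A X) hm'.le), le_div_iff₀ hm'] at this
    linarith
  have h2 := integral_mono (integrable_const (m * (unifQuantErr 1 m μ).toReal))
    (Sd_integrable (μ := μ) hI A) h
  simpa [sampleMeasure] using h2

lemma expWp_eq (hI : ∀ x₀ : E, Integrable (fun x => dist x x₀) μ) {n : ℕ} (hn : 0 < n) :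
    expWp 1 μ n = ENNReal.ofReal ((∫ X, Sd μ Finset.univ X ∂(sampleMeasure μ n)) / n) := by
  unfold expWp
  have : ∀ X, Wp 1 (empiricalMeasure n X) μ = ENNReal.ofReal (Sd μ Finset.univ X / n) := fun X =>
    le_antisymm (KD_upper hI hn X) (KD_lower hI hn X)
  simp_rw [this]
  rw [← ofReal_integral_eq_lintegral_ofReal, integral_div]
  · exact (Sd_integrable hI _).div_const _
  · filter_upwards with X
    exact div_nonneg (Sd_nonneg hI _ X) (by positivity)

lemma lower_real (hI : ∀ x₀ : E, Integrable (fun x => dist x x₀) μ) {n m : ℕ} (hn : 2 ≤ n)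
    (hm : 0 < m) (hmn : m ≤ n) :
    √((m : ℝ) / n) * (unifQuantErr 1 m μ).toReal ≤ 22 * √(Real.log (2 * n)) *
      ((∫ X, Sd μ Finset.univ X ∂(sampleMeasure μ n)) / n) := by
  classical
  set b := (unifQuantErr 1 m μ).toReal with hb
  set a := ∫ X, Sd μ Finset.univ X ∂(sampleMeasure μ n) with ha
  have hb0 : 0 ≤ b := ENNReal.toReal_nonneg
  have ha0 : 0 ≤ a := integral_nonneg fun X => Sd_nonneg hI _ X
  set r := n / m with hr
  have hr1 : 1 ≤ r := (Nat.one_le_div_iff hm).2 hmn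
  have hrn : r ≤ n := Nat.div_le_self _ _
  have hrm : r * m ≤ n := Nat.div_mul_le_self n m
  let B : Fin r → Finset (Fin n) := fun l =>
    Finset.univ.filter fun i : Fin n => (i : ℕ) / m = l
  have hBd : ∀ k l, k ≠ l → Disjoint (B k) (B l) := by
    intro k l hkl
    rw [Finset.disjoint_left]
    intro i hi hj
    simp only [B, Finset.mem_filter, Finset.mem_univ, true_and] at hi hj
    exact hkl (Fin.ext (hi.symm.trans hj))
  have hBc : ∀ l, (B l).card = m := by
    intro l
    have hlm : l.1 * m + m ≤ n := by
      have : (l.1 + 1) * m ≤ r * m := Nat.mul_le_mul_right _ l.2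
      nlinarith
    have : B l = (Finset.univ : Finset (Fin m)).image
        (fun i => (⟨l.1 * m + i.1, by omega⟩ : Fin n)) := by
      ext i
      simp only [B, Finset.mem_filter, Finset.mem_univ, true_and, Finset.mem_image]
      constructor
      · intro h
        refine ⟨⟨i.1 % m, Nat.mod_lt _ hm⟩, ?_⟩
        apply Fin.ext
        simp only
        rw [← h]
        exact Nat.div_add_mod' _ _
      · rintro ⟨j, rfl⟩
        simp only
        rw [mul_comm, Nat.mul_add_div hm, Nat.div_eq_of_lt j.2]; simp
    rw [this, Finset.card_image_of_injective]
    · simp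
    · intro i j hij
      simp only [Fin.mk.injEq] at hij
      exact Fin.ext (by omega)
  have h1 := lower_int hI (by omega) hr1 hrn B hBd
  set T := ∑ l, ∫ X, Sd μ (B l) X ∂(sampleMeasure μ n) with hT
  have hT1 : (r : ℝ) * (m * b) ≤ T := by
    have : ∑ l : Fin r, m * b ≤ T := Finset.sum_le_sum fun l _ => b_le_int hI hm (B l) (hBc l)
    simpa using this
  have hn' : (2 : ℝ) ≤ n := by exact_mod_cast hn
  have hm' : (0 : ℝ) < m := by exact_mod_cast hm
  have hr' : (1 : ℝ) ≤ r := by exact_mod_cast hr1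
  have hlog : 0 < Real.log (2 * n) := Real.log_pos (by linarith)
  have hT0 : 0 ≤ T := le_trans (by positivity) hT1
  have h2 : (4 * n : ℝ)⁻¹ * (2 * T) ≤ T / 4 := by
    rw [inv_mul_le_iff₀ (by positivity)]
    nlinarith
  have h3 : 3 / 4 * ((r : ℝ) * (m * b)) ≤ √(8 * Real.log (2 * n)) * √r * (4 * a) := by linarith
  have h4 : (n : ℝ) ≤ 2 * r * m := by
    have : n < (r + 1) * m := by
      rw [hr, mul_comm]; exact Nat.lt_mul_div_succ n hm
    have h5 : n ≤ 2 * r * m := by nlinarith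
    exact_mod_cast h5
  set l := √(Real.log (2 * n)) with hl
  have hl0 : 0 ≤ l := Real.sqrt_nonneg _
  have h8 : √(8 * Real.log (2 * n)) = √8 * l := Real.sqrt_mul (by norm_num) _
  rw [h8] at h3
  -- divide by √r
  set q := √(r : ℝ) with hq
  have hq0 : 0 < q := Real.sqrt_pos.2 (by linarith)
  have hqq : (r : ℝ) = q * q := (Real.mul_self_sqrt (by linarith)).symm
  have h5 : 3 / 4 * (q * (m * b)) ≤ √8 * l * (4 * a) := by
    have : q * (3 / 4 * (q * (m * b))) ≤ q * (√8 * l * (4 * a)) := by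
      rw [hqq] at h3; nlinarith
    exact le_of_mul_le_mul_left this hq0
  -- √(m/n) n = √(m n) ≤ √2 q m
  have h6 : √((m : ℝ) / n) * n ≤ √2 * (q * m) := by
    apply le_of_sq_le_sq _ (by positivity)
    rw [mul_pow, Real.sq_sqrt (by positivity), mul_pow, mul_pow, Real.sq_sqrt (by norm_num), hq,
      Real.sq_sqrt (by linarith)]
    have : (m : ℝ) / n * n ^ 2 = m * n := by field_simp
    rw [this]; nlinarith
  have h7 : √2 * √8 = 4 := by
    rw [← Real.sqrt_mul (by norm_num)]
    rw [show (2 : ℝ) * 8 = 4 ^ 2 by norm_num]; exact Real.sqrt_sq (by norm_num)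
  have h9 : √((m : ℝ) / n) * b * n ≤ 22 * l * a := by
    have e1 : √((m : ℝ) / n) * n * b ≤ √2 * (q * m) * b := by gcongr
    have e2 : √2 * (3 / 4 * (q * (m * b))) ≤ √2 * (√8 * l * (4 * a)) := by gcongr
    have e3 : √2 * (√8 * l * (4 * a)) = 16 * (l * a) := by
      calc _ = (√2 * √8) * (4 * (l * a)) := by ring
        _ = _ := by rw [h7]; ring
    have : 0 ≤ l * a := by positivity
    nlinarith
  rw [← mul_div_assoc, le_div_iff₀ (by linarith)]
  exact h9

lemma lower_final (hI : ∀ x₀ : E, Integrable (fun x => dist x x₀) μ) {n : ℕ} (hn : 1 ≤ n) :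
    ENNReal.ofReal (1 / (22 * Real.sqrt (Real.log (2 * n)))) *
        (⨆ k ∈ Finset.range (Nat.log 2 n + 1),
          ENNReal.ofReal (Real.sqrt ((2 : ℝ) ^ k / n)) * unifQuantErr 1 (2 ^ k) μ)
      ≤ expWp 1 μ n := by
  rw [expWp_eq hI hn]
  set a := (∫ X, Sd μ Finset.univ X ∂(sampleMeasure μ n)) with ha
  have hn' : (1 : ℝ) ≤ n := by exact_mod_cast hn
  have hl2 : 0 < Real.log (2 * n) := Real.log_pos (by linarith)
  have hs : 0 < √(Real.log (2 * n)) := Real.sqrt_pos.2 hl2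
  have ha0 : 0 ≤ a := integral_nonneg fun X => Sd_nonneg hI _ X
  have key : ∀ k ∈ Finset.range (Nat.log 2 n + 1), √((2 : ℝ) ^ k / n) *
      (unifQuantErr 1 (2 ^ k) μ).toReal ≤ 22 * √(Real.log (2 * n)) * (a / n) := by
    intro k hk
    rw [Finset.mem_range] at hk
    have hkn : 2 ^ k ≤ n := Nat.pow_le_of_le_log (by omega) (by omega)
    rcases Nat.lt_or_ge n 2 with h1 | h2
    · have hn1 : n = 1 := by omega
      subst hn1
      have hk0 : k = 0 := by simpa using hk
      subst hk0
      have := b_le_int hI (n := 1) (m := 1) (by norm_num) Finset.univ (by simp)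
      have hlog : (0.69 : ℝ) < Real.log (2 * (1 : ℕ)) := by
        simp; linarith [Real.log_two_gt_d9]
      have hsq : 0.5 ≤ √(Real.log (2 * (1 : ℕ))) := by
        apply Real.le_sqrt_of_sq_le; linarith
      have hb0 : 0 ≤ (unifQuantErr 1 1 μ).toReal := ENNReal.toReal_nonneg
      rw [← ha] at this
      simp only [Nat.cast_one, one_mul, mul_one, pow_zero, div_one, Real.sqrt_one] at this hsq ⊢
      nlinarith
    · have := lower_real hI h2 (pow_pos two_pos k) hkn
      simpa using this
  rw [ENNReal.mul_iSup]
  apply iSup_le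
  intro k
  rw [ENNReal.mul_iSup]
  apply iSup_le
  intro hk
  have hfin := b_ne_top hI (μ := μ) (pow_pos two_pos k)
  rw [← ENNReal.ofReal_toReal hfin, ← ENNReal.ofReal_mul (by positivity),
    ← ENNReal.ofReal_mul (by positivity)]
  apply ENNReal.ofReal_le_ofReal
  rw [one_div, inv_mul_le_iff₀ (by positivity)]
  exact key k hk

end lower2

section upper
set_option linter.unusedSectionVars false
variable {E : Type*} [MetricSpace E] [SecondCountableTopology E] [MeasurableSpace E] [BorelSpace E]
  {μ : Measure E} [IsProbabilityMeasure μ]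

/-- a balanced fractional partition of `μ` into `N` pieces of mass `1/N` -/
structure IsPart (μ : Measure E) (N : ℕ) (M : Fin N → E → ℝ) : Prop where
  meas : ∀ j, Measurable (M j)
  nonneg : ∀ j x, 0 ≤ M j x
  sum_one : ∀ x, ∑ j, M j x = 1
  mean : ∀ j, ∫ x, M j x ∂μ = (N : ℝ)⁻¹

lemma IsPart.le_one {N : ℕ} {M : Fin N → E → ℝ} (h : IsPart μ N M) (j : Fin N) (x : E) :
    M j x ≤ 1 := by
  rw [← h.sum_one x]
  exact Finset.single_le_sum (f := fun j => M j x) (fun i _ => h.nonneg i x) (Finset.mem_univ j)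

lemma bdd_integrable {g : E → ℝ} (hg : Measurable g) (h0 : ∀ x, 0 ≤ g x) (h1 : ∀ x, g x ≤ 1) :
    Integrable g μ := by
  refine Integrable.of_bound hg.aestronglyMeasurable 1 ?_
  filter_upwards with x
  rw [Real.norm_eq_abs, abs_of_nonneg (h0 x)]; exact h1 x

lemma IsPart.integrable {N : ℕ} {M : Fin N → E → ℝ} (h : IsPart μ N M) (j : Fin N) :
    Integrable (M j) μ := bdd_integrable (h.meas j) (h.nonneg j) (h.le_one j)

lemma exists_index {N : ℕ} (hN : 0 < N) (z : Fin N → E) :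
    ∃ s : E → Fin N, Measurable s ∧ ∀ i, z (s (z i)) = z i := by
  classical
  let s : E → Fin N := fun y => if h : ∃ i, z i = y then h.choose else ⟨0, hN⟩
  have hs : ∀ y, y ∉ Set.range z → s y = ⟨0, hN⟩ := by
    intro y hy
    exact dif_neg hy
  have hfin : (Set.range z).Finite := Set.finite_range z
  refine ⟨s, ?_, ?_⟩
  · have key : ∀ T : Set (Fin N), ⟨0, hN⟩ ∉ T → MeasurableSet (s ⁻¹' T) := by
      intro T hT
      apply Set.Finite.measurableSet
      apply hfin.subset
      intro y hy
      by_contra hc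
      rw [Set.mem_preimage, hs y hc] at hy
      exact hT hy
    intro T _
    by_cases hT : (⟨0, hN⟩ : Fin N) ∈ T
    · have := (key Tᶜ (by simpa using hT)).compl
      simpa using this
    · exact key T hT
  · intro i
    have h : ∃ k, z k = z i := ⟨i, rfl⟩
    have : s (z i) = h.choose := dif_pos h
    rw [this]
    exact h.choose_spec

lemma exists_kernel {N : ℕ} (hN : 0 < N) (z : Fin N → E) {c : ℝ}
    (h : Wp 1 μ (empiricalMeasure N z) < ENNReal.ofReal c) :
    ∃ M : Fin N → E → ℝ, IsPart μ N M ∧ Integrable (fun x => ∑ j, M j x * dist x (z j)) μ ∧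
      ∫ x, ∑ j, M j x * dist x (z j) ∂μ ≤ c := by
  classical
  have : NeZero N := ⟨hN.ne'⟩
  have hN' : (0 : ℝ) < N := by exact_mod_cast hN
  unfold Wp at h
  simp only [iInf_lt_iff] at h
  obtain ⟨γ, ⟨h1, h2⟩, h3⟩ := h
  simp only [ENNReal.rpow_one, div_one] at h3
  obtain ⟨s, hs, hzs⟩ := exists_index hN z
  have hφ : Measurable (fun p : E × E => (p.1, s p.2)) :=
    measurable_fst.prodMk (hs.comp measurable_snd)
  let ρ : Measure (E × Fin N) := γ.map (fun p => (p.1, s p.2))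
  have hρfst : ρ.fst = μ := by
    rw [Measure.fst, Measure.map_map measurable_fst hφ, ← h1]
    rfl
  have : IsProbabilityMeasure ρ.fst := by rw [hρfst]; infer_instance
  have : IsFiniteMeasure ρ := by
    constructor
    have := measure_lt_top ρ.fst Set.univ
    rwa [Measure.fst_univ] at this
  let κ := ρ.condKernel
  have hdis : μ.compProd κ = ρ := by
    rw [← hρfst]; exact ρ.disintegrate ρ.condKernel
  have hlint : ∀ g : E × Fin N → ℝ≥0∞, Measurable g →
      ∫⁻ p, g (p.1, s p.2) ∂γ = ∫⁻ x, ∑ i, g (x, i) * κ x {i} ∂μ := by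
    intro g hg
    have e1 : ∫⁻ p, g (p.1, s p.2) ∂γ = ∫⁻ q, g q ∂ρ := (lintegral_map hg hφ).symm
    rw [e1, ← hdis, Measure.lintegral_compProd hg]
    simp_rw [lintegral_fintype]
  let p : Fin N → E → ℝ := fun i x => (κ x).real {i}
  have hpm : ∀ i, Measurable (p i) := fun i =>
    (κ.measurable_coe (measurableSet_singleton i)).ennreal_toReal
  have hp0 : ∀ i x, 0 ≤ p i x := fun i x => measureReal_nonneg
  have hp1 : ∀ i x, p i x ≤ 1 := fun i x => measureReal_le_one
  have hps : ∀ x, ∑ i, p i x = 1 := by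
    intro x
    simp [p]
  have hpi : ∀ i, Integrable (p i) μ := fun i => bdd_integrable (hpm i) (hp0 i) (hp1 i)
  have hpmean : ∀ i, ∫ x, p i x ∂μ = (N : ℝ)⁻¹ * ∑ k, if s (z k) = i then 1 else 0 := by
    intro i
    have e1 : ∫ x, p i x ∂μ = (∫⁻ x, κ x {i} ∂μ).toReal := by
      rw [integral_eq_lintegral_of_nonneg_ae (Eventually.of_forall (hp0 i))
        (hpm i).aestronglyMeasurable]
      congr 1
      apply lintegral_congr
      intro x
      exact ENNReal.ofReal_toReal (measure_ne_top _ _)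
    have e2 := hlint (fun q => if q.2 = i then 1 else 0) (by
      exact Measurable.comp (measurable_of_countable (fun j : Fin N => if j = i then (1 : ℝ≥0∞) else 0))
        measurable_snd)
    simp at e2
    rw [e1, ← e2]
    have e3 : ∫⁻ q : E × E, (if s q.2 = i then (1 : ℝ≥0∞) else 0) ∂γ =
        ∫⁻ y, (if s y = i then (1 : ℝ≥0∞) else 0) ∂(empiricalMeasure N z) := by
      rw [← h2, lintegral_map _ measurable_snd]
      exact Measurable.comp (measurable_of_countable (fun j : Fin N => if j = i then (1 : ℝ≥0∞) else 0)) hs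
    rw [e3]
    unfold empiricalMeasure
    rw [lintegral_smul_measure, lintegral_finsetSum_measure]
    have e4 : ∀ k, ∫⁻ y, (if s y = i then (1 : ℝ≥0∞) else 0) ∂(Measure.dirac (z k)) =
        if s (z k) = i then 1 else 0 := fun k => lintegral_dirac' (z k)
      (Measurable.comp (measurable_of_countable (fun j : Fin N => if j = i then (1 : ℝ≥0∞) else 0)) hs)
    simp_rw [e4]
    simp
  have hcost : ∫⁻ x, ENNReal.ofReal (∑ i, p i x * dist x (z i)) ∂μ < ENNReal.ofReal c := by
    refine lt_of_le_of_lt (le_of_eq ?_) h3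
    have hgm : Measurable (fun q : E × Fin N => edist q.1 (z q.2)) :=
      measurable_fst.edist ((measurable_of_countable z).comp measurable_snd)
    have e1 := hlint (fun q => edist q.1 (z q.2)) hgm
    have e2 : ∫⁻ q : E × E, edist q.1 (z (s q.2)) ∂γ = ∫⁻ q : E × E, edist q.1 q.2 ∂γ := by
      apply lintegral_congr_ae
      have hae : ∀ᵐ y ∂(γ.map Prod.snd), z (s y) = y := by
        rw [h2]
        unfold empiricalMeasure
        apply Measure.ae_smul_measure
        rw [ae_iff, Measure.finsetSum_apply]
        apply Finset.sum_eq_zero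
        intro i _
        rw [← ae_iff]
        have : MeasurableSet {y | z (s y) = y} :=
          measurableSet_eq_fun ((measurable_of_countable z).comp hs) measurable_id
        rw [ae_dirac_iff this]
        exact hzs i
      filter_upwards [ae_of_ae_map measurable_snd.aemeasurable hae] with q hq
      rw [hq]
    rw [← e2, e1]
    apply lintegral_congr
    intro x
    rw [ENNReal.ofReal_sum_of_nonneg fun i _ => mul_nonneg (hp0 i x) dist_nonneg]
    apply Finset.sum_congr rfl
    intro i _
    rw [ENNReal.ofReal_mul (hp0 i x), edist_dist, mul_comm]
    congr 1
    exact ENNReal.ofReal_toReal (measure_ne_top _ _)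
  let mult : Fin N → ℝ := fun i => ∑ k, if z k = z i then 1 else 0
  have hmult : ∀ i, 0 < mult i := by
    intro i
    apply Finset.sum_pos' (fun k _ => by split_ifs <;> norm_num)
    exact ⟨i, Finset.mem_univ _, by simp⟩
  have hmulteq : ∀ i j, z i = z j → mult i = mult j := by
    intro i j hij; simp only [mult, hij]
  let R : Fin N → Fin N → ℝ := fun i j => if z j = z i then (mult i)⁻¹ else 0
  have hR0 : ∀ i j, 0 ≤ R i j := by
    intro i j; simp only [R]; split_ifs
    · exact inv_nonneg.2 (hmult i).le
    · exact le_rfl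
  have hR1 : ∀ i, ∑ j, R i j = 1 := by
    intro i
    have : ∑ j, R i j = (mult i)⁻¹ * mult i := by
      simp only [R, mult]
      rw [Finset.mul_sum]
      apply Finset.sum_congr rfl
      intro j _; split_ifs <;> simp
    rw [this, inv_mul_cancel₀ (hmult i).ne']
  let M : Fin N → E → ℝ := fun j x => ∑ i, p i x * R i j
  have hMd : ∀ x, ∑ j, M j x * dist x (z j) = ∑ i, p i x * dist x (z i) := by
    intro x
    simp only [M, Finset.sum_mul]
    rw [Finset.sum_comm]
    apply Finset.sum_congr rfl
    intro i _
    have : ∀ j, p i x * R i j * dist x (z j) = p i x * dist x (z i) * R i j := by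
      intro j
      simp only [R]
      split_ifs with hij
      · rw [hij]; ring
      · simp
    simp_rw [this]
    rw [← Finset.mul_sum, hR1, mul_one]
  have hint : Integrable (fun x => ∑ i, p i x * dist x (z i)) μ := by
    rw [← lintegral_ofReal_ne_top_iff_integrable]
    · exact hcost.ne_top
    · apply Measurable.aestronglyMeasurable
      apply Finset.measurable_sum
      intro i _
      exact (hpm i).mul (measurable_id.dist measurable_const)
    · exact Eventually.of_forall fun x => Finset.sum_nonneg fun i _ =>
        mul_nonneg (hp0 i x) dist_nonneg
  refine ⟨M, ⟨?_, ?_, ?_, ?_⟩, ?_, ?_⟩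
  · intro j
    apply Finset.measurable_sum
    intro i _
    exact (hpm i).mul measurable_const
  · intro j x
    exact Finset.sum_nonneg fun i _ => mul_nonneg (hp0 i x) (hR0 i j)
  · intro x
    simp only [M]
    rw [Finset.sum_comm]
    simp_rw [← Finset.mul_sum, hR1, mul_one, hps]
  · intro j
    simp only [M]
    rw [integral_finsetSum _ fun i _ => (hpi i).mul_const _]
    simp_rw [integral_mul_const, hpmean]
    have e1 : ∀ i, (N : ℝ)⁻¹ * (∑ k, if s (z k) = i then (1 : ℝ) else 0) * R i j =
        (N : ℝ)⁻¹ * (mult j)⁻¹ * ∑ k, if s (z k) = i then (if z j = z i then 1 else 0) else 0 := by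
      intro i
      simp only [R]
      split_ifs with hij
      · rw [hmulteq i j hij.symm]; ring
      · simp
    simp_rw [e1]
    rw [← Finset.mul_sum, Finset.sum_comm]
    have e2 : ∑ k, ∑ i, (if s (z k) = i then (if z j = z i then (1 : ℝ) else 0) else 0) = mult j := by
      simp only [mult]
      apply Finset.sum_congr rfl
      intro k _
      simp [hzs, eq_comm]
    rw [e2, mul_assoc, inv_mul_cancel₀ (hmult j).ne', mul_one]
  · simp_rw [hMd]; exact hint
  · simp_rw [hMd]
    rw [integral_eq_lintegral_of_nonneg_ae _ hint.aestronglyMeasurable]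
    · have hc : 0 ≤ c := by
        by_contra hc
        rw [ENNReal.ofReal_of_nonpos (by linarith)] at hcost
        simp at hcost
      rw [← ENNReal.toReal_ofReal hc]
      exact ENNReal.toReal_mono ENNReal.ofReal_ne_top hcost.le
    · exact Eventually.of_forall fun x => Finset.sum_nonneg fun i _ =>
        mul_nonneg (hp0 i x) dist_nonneg

end upper

section upper2
set_option linter.unusedSectionVars false
variable {E : Type*} [MetricSpace E] [SecondCountableTopology E] [MeasurableSpace E] [BorelSpace E]
  {μ : Measure E} [IsProbabilityMeasure μ]

/-- empirical mean minus mean -/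
noncomputable def sig (μ : Measure E) (n : ℕ) (h : E → ℝ) (X : Fin n → E) : ℝ :=
  (n : ℝ)⁻¹ * ∑ s, h (X s) - ∫ x, h x ∂μ

lemma sig_sum {n : ℕ} {ι : Type*} (A : Finset ι) (h : ι → E → ℝ) (w : ι → ℝ)
    (hi : ∀ j, Integrable (h j) μ) (X : Fin n → E) :
    sig μ n (fun x => ∑ j ∈ A, h j x * w j) X = ∑ j ∈ A, sig μ n (h j) X * w j := by
  unfold sig
  rw [integral_finsetSum A fun j _ => (hi j).mul_const _]
  simp_rw [integral_mul_const, sub_mul, Finset.sum_sub_distrib]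
  congr 1
  rw [Finset.sum_comm, Finset.mul_sum]
  apply Finset.sum_congr rfl
  intro j _
  rw [← Finset.sum_mul, mul_assoc]

lemma eval_integrable {n : ℕ} (s : Fin n) {h : E → ℝ} (hi : Integrable h μ) :
    Integrable (fun X : Fin n → E => h (X s)) (sampleMeasure μ n) :=
  (measurePreserving_eval (fun _ : Fin n => μ) s).integrable_comp_of_integrable hi

lemma eval_integral {n : ℕ} (s : Fin n) {h : E → ℝ} (hi : Integrable h μ) :
    ∫ X : Fin n → E, h (X s) ∂(sampleMeasure μ n) = ∫ x, h x ∂μ := by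
  have hm := (measurePreserving_eval (fun _ : Fin n => μ) s)
  have := integral_map (μ := Measure.pi fun _ : Fin n => μ) (φ := Function.eval s) (f := h)
    hm.measurable.aemeasurable (by rw [hm.map_eq]; exact hi.aestronglyMeasurable)
  rw [hm.map_eq] at this
  exact this.symm

lemma mean_integral {n : ℕ} (hn : 0 < n) {h : E → ℝ} (hi : Integrable h μ) :
    Integrable (fun X : Fin n → E => (n : ℝ)⁻¹ * ∑ s, h (X s)) (sampleMeasure μ n) ∧
    ∫ X : Fin n → E, (n : ℝ)⁻¹ * ∑ s, h (X s) ∂(sampleMeasure μ n) = ∫ x, h x ∂μ := by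
  have hn' : (n : ℝ) ≠ 0 := by exact_mod_cast hn.ne'
  refine ⟨(integrable_finsetSum _ fun s _ => eval_integrable s hi).const_mul _, ?_⟩
  rw [integral_const_mul, integral_finsetSum _ fun s _ => eval_integrable s hi]
  simp_rw [fun s => eval_integral (n := n) s hi]
  simp; field_simp

lemma sig_abs {n : ℕ} (hn : 0 < n) {h : E → ℝ} (hm : Measurable h) (h0 : ∀ x, 0 ≤ h x)
    (h1 : ∀ x, h x ≤ 1) :
    Integrable (fun X => |sig μ n h X|) (sampleMeasure μ n) ∧
    ∫ X, |sig μ n h X| ∂(sampleMeasure μ n) ≤ √((∫ x, h x ∂μ) / n) := by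
  have hn' : (0 : ℝ) < n := by exact_mod_cast hn
  have hi : Integrable h μ := bdd_integrable hm h0 h1
  have hmn := mean_integral (n := n) hn hi
  have hL2 : MemLp h 2 μ := by
    refine MemLp.of_bound hm.aestronglyMeasurable 1 ?_
    filter_upwards with x
    rw [Real.norm_eq_abs, abs_of_nonneg (h0 x)]; exact h1 x
  have hmeas : Measurable (sig μ n h) := by
    unfold sig
    refine Measurable.sub ?_ measurable_const
    refine Measurable.const_mul ?_ _
    exact Finset.measurable_sum _ fun s _ => hm.comp (measurable_pi_apply s)
  have hb : ∀ X, |sig μ n h X| ≤ 1 := by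
    intro X
    have e1 : 0 ≤ (n : ℝ)⁻¹ * ∑ s, h (X s) :=
      mul_nonneg (by positivity) (Finset.sum_nonneg fun s _ => h0 _)
    have e2 : (n : ℝ)⁻¹ * ∑ s, h (X s) ≤ 1 := by
      rw [inv_mul_le_iff₀ hn', mul_one]
      calc ∑ s, h (X s) ≤ ∑ s : Fin n, (1 : ℝ) := Finset.sum_le_sum fun s _ => h1 _
        _ = n := by simp
    have e3 : 0 ≤ ∫ x, h x ∂μ := integral_nonneg h0
    have e4 : ∫ x, h x ∂μ ≤ 1 := by
      have := integral_mono hi (integrable_const 1) h1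
      simpa using this
    unfold sig
    rw [abs_le]; constructor <;> linarith
  have hS2 : MemLp (fun X => |sig μ n h X|) 2 (sampleMeasure μ n) := by
    refine MemLp.of_bound hmeas.abs.aestronglyMeasurable 1 ?_
    filter_upwards with X
    rw [Real.norm_eq_abs, abs_abs]; exact hb X
  refine ⟨hS2.integrable (by norm_num), ?_⟩
  apply Real.le_sqrt_of_sq_le
  have v1 := ProbabilityTheory.variance_nonneg (fun X => |sig μ n h X|) (sampleMeasure μ n)
  rw [ProbabilityTheory.variance_eq_sub hS2] at v1
  have v2 : ∫ X, sig μ n h X ^ 2 ∂(sampleMeasure μ n) =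
      ProbabilityTheory.variance (fun X : Fin n → E => (n : ℝ)⁻¹ * ∑ s, h (X s))
        (sampleMeasure μ n) := by
    rw [ProbabilityTheory.variance_eq_integral hmn.1.aestronglyMeasurable.aemeasurable, hmn.2]
    rfl
  have v3 : ProbabilityTheory.variance (fun X : Fin n → E => ∑ s, h (X s)) (sampleMeasure μ n) =
      n * ProbabilityTheory.variance h μ := by
    have := ProbabilityTheory.variance_sum_pi (ι := Fin n) (μ := fun _ => μ) (X := fun _ => h)
      (fun _ => hL2)
    have e : (fun X : Fin n → E => ∑ s, h (X s)) = (∑ s, fun ω : Fin n → E => h (ω s)) := by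
      ext X; simp
    rw [e]
    unfold sampleMeasure
    rw [this]; simp
  have v4 : ProbabilityTheory.variance h μ ≤ ∫ x, h x ∂μ := by
    refine (ProbabilityTheory.variance_le_expectation_sq hm.aestronglyMeasurable).trans ?_
    apply integral_mono_of_nonneg (Eventually.of_forall fun x => by simpa using sq_nonneg (h x)) hi
    filter_upwards with x
    simp only [Pi.pow_apply]
    nlinarith [h0 x, h1 x]
  rw [ProbabilityTheory.variance_const_mul, v3] at v2
  have v5 : ∫ X, ((fun X => |sig μ n h X|) ^ 2) X ∂(sampleMeasure μ n) =
      ∫ X, sig μ n h X ^ 2 ∂(sampleMeasure μ n) := by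
    congr 1; ext X; simp
  rw [v5, v2] at v1
  have v6 : (n : ℝ)⁻¹ ^ 2 * (n * ProbabilityTheory.variance h μ) ≤ (∫ x, h x ∂μ) / n := by
    rw [le_div_iff₀ hn']
    calc _ = ProbabilityTheory.variance h μ := by field_simp
      _ ≤ _ := v4
  linarith

/-- one chaining step -/
lemma chain_step {n : ℕ} (hn : 0 < n) {N N' : ℕ} (hN : 0 < N) (hN' : N = 2 * N')
    (z : Fin N → E) (z' : Fin N' → E)
    (U : Fin N → E → ℝ) (U' : Fin N' → E → ℝ) (hU : IsPart μ N U) (hU' : IsPart μ N' U')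
    {c c' : ℝ} (hi : Integrable (fun x => ∑ j, U j x * dist x (z j)) μ)
    (hc : ∫ x, ∑ j, U j x * dist x (z j) ∂μ ≤ c)
    (hi' : Integrable (fun x => ∑ j, U' j x * dist x (z' j)) μ)
    (hc' : ∫ x, ∑ j, U' j x * dist x (z' j) ∂μ ≤ c')
    (M : Fin N → E → ℝ) (hM : IsPart μ N M) :
    ∃ (M' : Fin N' → E → ℝ) (G : (Fin n → E) → ℝ), IsPart μ N' M' ∧
      Integrable G (sampleMeasure μ n) ∧ ∫ X, G X ∂(sampleMeasure μ n) ≤ √(N / n) * (c + c') ∧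
      ∀ f : E → ℝ, LipschitzWith 1 f → ∀ X : Fin n → E,
        ∑ j, f (z j) * sig μ n (M j) X ≤ G X + ∑ l, f (z' l) * sig μ n (M' l) X := by
  have hNr : (0 : ℝ) < N := by exact_mod_cast hN
  have hn' : (0 : ℝ) < n := by exact_mod_cast hn
  have hNN : (N : ℝ) = 2 * N' := by exact_mod_cast hN'
  have hN'r : (0 : ℝ) < N' := by linarith
  have hUUm : ∀ j l, Measurable (fun x => U j x * U' l x) := fun j l =>
    (hU.meas j).mul (hU'.meas l)
  have hUU0 : ∀ j l x, 0 ≤ U j x * U' l x := fun j l x =>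
    mul_nonneg (hU.nonneg j x) (hU'.nonneg l x)
  have hUUi : ∀ j l, Integrable (fun x => U j x * U' l x) μ := fun j l =>
    bdd_integrable (hUUm j l) (hUU0 j l) fun x => by
      nlinarith [hU.nonneg j x, hU'.nonneg l x, hU.le_one j x, hU'.le_one l x]
  let Q : Fin N → Fin N' → ℝ := fun j l => N * ∫ x, U j x * U' l x ∂μ
  have hQ0 : ∀ j l, 0 ≤ Q j l := fun j l =>
    mul_nonneg hNr.le (integral_nonneg (hUU0 j l))
  have hQr : ∀ j, ∑ l, Q j l = 1 := by
    intro j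
    simp only [Q]
    rw [← Finset.mul_sum, ← integral_finsetSum _ fun l _ => hUUi j l]
    simp_rw [← Finset.mul_sum, hU'.sum_one, mul_one, hU.mean]
    exact mul_inv_cancel₀ hNr.ne'
  have hQc : ∀ l, ∑ j, Q j l = 2 := by
    intro l
    simp only [Q]
    rw [← Finset.mul_sum, ← integral_finsetSum _ fun j _ => hUUi j l]
    simp_rw [← Finset.sum_mul, hU.sum_one, one_mul, hU'.mean]
    rw [hNN]; field_simp
  let w : Fin N → ℝ := fun j => ∑ l, Q j l * dist (z j) (z' l)
  have hw0 : ∀ j, 0 ≤ w j := fun j => Finset.sum_nonneg fun l _ => mul_nonneg (hQ0 j l) dist_nonneg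
  have hwsum : ∑ j, w j ≤ N * (c + c') := by
    have e1 : ∑ j, w j = N * ∫ x, ∑ j, ∑ l, U j x * U' l x * dist (z j) (z' l) ∂μ := by
      rw [integral_finsetSum _ fun j _ => integrable_finsetSum _ fun l _ => (hUUi j l).mul_const _]
      simp_rw [fun j => integral_finsetSum (μ := μ) Finset.univ fun l _ =>
        (hUUi j l).mul_const (dist (z j) (z' l)), integral_mul_const]
      simp only [w, Q, Finset.mul_sum, mul_assoc]
    rw [e1]
    apply mul_le_mul_of_nonneg_left _ hNr.le
    have e2 : ∫ x, ∑ j, ∑ l, U j x * U' l x * dist (z j) (z' l) ∂μ ≤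
        ∫ x, (∑ j, U j x * dist x (z j) + ∑ j, U' j x * dist x (z' j)) ∂μ := by
      apply integral_mono
        (integrable_finsetSum _ fun j _ => integrable_finsetSum _ fun l _ => (hUUi j l).mul_const _)
        (hi.add hi')
      intro x
      simp only
      calc ∑ j, ∑ l, U j x * U' l x * dist (z j) (z' l)
          ≤ ∑ j, ∑ l, (U j x * dist x (z j) * U' l x + U j x * (U' l x * dist x (z' l))) := by
            apply Finset.sum_le_sum; intro j _
            apply Finset.sum_le_sum; intro l _
            have := dist_triangle_left (z j) (z' l) x
            have h2 := hUU0 j l x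
            nlinarith [mul_le_mul_of_nonneg_left this h2]
        _ = _ := by
            simp_rw [Finset.sum_add_distrib, ← Finset.mul_sum, hU'.sum_one, mul_one,
              ← Finset.sum_mul, hU.sum_one, one_mul]
            rfl
    rw [integral_add hi hi'] at e2
    linarith
  let M' : Fin N' → E → ℝ := fun l x => ∑ j, M j x * Q j l
  have hM' : IsPart μ N' M' := by
    refine ⟨?_, ?_, ?_, ?_⟩
    · intro l
      exact Finset.measurable_sum _ fun j _ => (hM.meas j).mul measurable_const
    · intro l x
      exact Finset.sum_nonneg fun j _ => mul_nonneg (hM.nonneg j x) (hQ0 j l)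
    · intro x
      simp only [M']
      rw [Finset.sum_comm]
      simp_rw [← Finset.mul_sum, hQr, mul_one, hM.sum_one]
    · intro l
      simp only [M']
      rw [integral_finsetSum _ fun j _ => (hM.integrable j).mul_const _]
      simp_rw [integral_mul_const, hM.mean]
      rw [← Finset.mul_sum, hQc, hNN]
      field_simp
  have hs := fun j => sig_abs (μ := μ) hn (hM.meas j) (hM.nonneg j) (hM.le_one j)
  refine ⟨M', fun X => ∑ j, |sig μ n (M j) X| * w j, hM', ?_, ?_, ?_⟩
  · exact integrable_finsetSum _ fun j _ => (hs j).1.mul_const _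
  · rw [integral_finsetSum _ fun j _ => (hs j).1.mul_const _]
    simp_rw [integral_mul_const]
    have e1 : √((N : ℝ)⁻¹ / n) * N = √(N / n) := by
      rw [show (N : ℝ) / n = (N : ℝ)⁻¹ / n * N ^ 2 by field_simp,
        Real.sqrt_mul (by positivity), Real.sqrt_sq hNr.le]
    calc ∑ j, (∫ X, |sig μ n (M j) X| ∂(sampleMeasure μ n)) * w j
        ≤ ∑ j, √((N : ℝ)⁻¹ / n) * w j := by
          apply Finset.sum_le_sum; intro j _
          apply mul_le_mul_of_nonneg_right _ (hw0 j)
          have := (hs j).2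
          rwa [hM.mean] at this
      _ = √((N : ℝ)⁻¹ / n) * ∑ j, w j := by rw [Finset.mul_sum]
      _ ≤ √((N : ℝ)⁻¹ / n) * (N * (c + c')) :=
          mul_le_mul_of_nonneg_left hwsum (Real.sqrt_nonneg _)
      _ = _ := by rw [← mul_assoc, e1]
  · intro f hf X
    have e1 : ∀ l, sig μ n (M' l) X = ∑ j, sig μ n (M j) X * Q j l := fun l =>
      sig_sum Finset.univ M (fun j => Q j l) hM.integrable X
    simp_rw [e1]
    have e2 : ∑ l, f (z' l) * ∑ j, sig μ n (M j) X * Q j l =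
        ∑ j, sig μ n (M j) X * ∑ l, Q j l * f (z' l) := by
      simp_rw [Finset.mul_sum]
      rw [Finset.sum_comm]
      apply Finset.sum_congr rfl; intro j _
      apply Finset.sum_congr rfl; intro l _
      ring
    rw [e2, ← Finset.sum_add_distrib]
    apply Finset.sum_le_sum
    intro j _
    have e3 : f (z j) = ∑ l, Q j l * f (z j) := by rw [← Finset.sum_mul, hQr, one_mul]
    have e4 : |f (z j) - ∑ l, Q j l * f (z' l)| ≤ w j := by
      rw [e3, ← Finset.sum_sub_distrib]
      refine (Finset.abs_sum_le_sum_abs _ _).trans ?_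
      apply Finset.sum_le_sum
      intro l _
      rw [← mul_sub, abs_mul, abs_of_nonneg (hQ0 j l)]
      apply mul_le_mul_of_nonneg_left _ (hQ0 j l)
      have := hf.dist_le_mul (z j) (z' l)
      rw [Real.dist_eq] at this
      simpa using this
    have e5 := le_abs_self (sig μ n (M j) X * (f (z j) - ∑ l, Q j l * f (z' l)))
    rw [abs_mul] at e5
    have e6 := mul_le_mul_of_nonneg_left e4 (abs_nonneg (sig μ n (M j) X))
    nlinarith

lemma chain {n : ℕ} (hn : 0 < n) (z : ∀ k, Fin (2 ^ k) → E) (U : ∀ k, Fin (2 ^ k) → E → ℝ)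
    (hU : ∀ k, IsPart μ (2 ^ k) (U k)) (c : ℕ → ℝ)
    (hi : ∀ k, Integrable (fun x => ∑ j, U k j x * dist x (z k j)) μ)
    (hc : ∀ k, ∫ x, ∑ j, U k j x * dist x (z k j) ∂μ ≤ c k) (k : ℕ) :
    ∀ M : Fin (2 ^ k) → E → ℝ, IsPart μ (2 ^ k) M →
    ∃ G : (Fin n → E) → ℝ, Integrable G (sampleMeasure μ n) ∧
      ∫ X, G X ∂(sampleMeasure μ n) ≤
        ∑ i ∈ Finset.range k, √((2 : ℝ) ^ (i + 1) / n) * (c (i + 1) + c i) ∧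
      ∀ f : E → ℝ, LipschitzWith 1 f → ∀ X : Fin n → E,
        ∑ j, f (z k j) * sig μ n (M j) X ≤ G X := by
  induction k with
  | zero =>
    intro M hM
    refine ⟨fun _ => 0, integrable_zero _ _ _, by simp, ?_⟩
    intro f hf X
    have hn' : (n : ℝ) ≠ 0 := by exact_mod_cast hn.ne'
    have h1 : ∀ j x, M j x = 1 := by
      intro j x
      rw [← hM.sum_one x]
      symm
      apply Finset.sum_eq_single_of_mem j (Finset.mem_univ _)
      intro b _ hb
      exact absurd (Subsingleton.elim (α := Fin 1) b j) hb
    have h2 : ∀ j, sig μ n (M j) X = 0 := by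
      intro j
      unfold sig
      simp_rw [h1]
      simp [hn']
    simp [h2]
  | succ k ih =>
    intro M hM
    obtain ⟨M', G, hM', hG, hGi, hGf⟩ := chain_step hn (pow_pos two_pos (k + 1)) (by ring)
      (z (k + 1)) (z k) (U (k + 1)) (U k) (hU _) (hU _) (hi _) (hc _) (hi _) (hc _) M hM
    obtain ⟨G', hG', hGi', hGf'⟩ := ih M' hM'
    refine ⟨fun X => G X + G' X, hG.add hG', ?_, ?_⟩
    · rw [integral_add hG hG', Finset.sum_range_succ]
      push_cast at hGi
      linarith
    · intro f hf X
      exact (hGf f hf X).trans (add_le_add_right (hGf' f hf X) _)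

lemma upper_real (hI : ∀ x₀ : E, Integrable (fun x => dist x x₀) μ) {n : ℕ} (hn : 0 < n)
    (z : ∀ k, Fin (2 ^ k) → E) (c : ℕ → ℝ)
    (h : ∀ k, Wp 1 μ (empiricalMeasure (2 ^ k) (z k)) < ENNReal.ofReal (c k)) (K : ℕ) :
    (∫ X, Sd μ Finset.univ X ∂(sampleMeasure μ n)) / n ≤
      2 * c K + ∑ i ∈ Finset.range K, √((2 : ℝ) ^ (i + 1) / n) * (c (i + 1) + c i) := by
  choose U hU hi hc using fun k => exists_kernel (pow_pos two_pos k) (z k) (h k)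
  obtain ⟨G, hG, hGi, hGf⟩ := chain hn z U hU c hi hc K (U K) (hU K)
  have hn' : (0 : ℝ) < n := by exact_mod_cast hn
  set H : E → ℝ := fun x => ∑ j, U K j x * dist x (z K j) with hH
  have hm := mean_integral hn (hi K)
  have key : ∀ X : Fin n → E, Sd μ Finset.univ X ≤
      n * (G X + ((n : ℝ)⁻¹ * ∑ s, H (X s)) + ∫ x, H x ∂μ) := by
    intro X
    apply Sd_le
    intro f hf
    have hfi := lip_integrable hI hf
    let fK : E → ℝ := fun x => ∑ j, U K j x * f (z K j)
    have hfK : sig μ n fK X ≤ G X := by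
      have := sig_sum (n := n) Finset.univ (U K) (fun j => f (z K j)) (hU K).integrable X
      simp only [fK]
      rw [this]
      refine le_trans (le_of_eq ?_) (hGf f hf X)
      apply Finset.sum_congr rfl; intros; ring
    have hfKi : Integrable fK μ := integrable_finsetSum _ fun j _ => ((hU K).integrable j).mul_const _
    have hd : ∀ x, |f x - fK x| ≤ H x := by
      intro x
      have e1 : f x = ∑ j, U K j x * f x := by rw [← Finset.sum_mul, (hU K).sum_one, one_mul]
      simp only [fK, hH]
      rw [e1, ← Finset.sum_sub_distrib]
      refine (Finset.abs_sum_le_sum_abs _ _).trans ?_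
      apply Finset.sum_le_sum
      intro j _
      rw [← mul_sub, abs_mul, abs_of_nonneg ((hU K).nonneg j x)]
      apply mul_le_mul_of_nonneg_left _ ((hU K).nonneg j x)
      have := hf.dist_le_mul x (z K j)
      rw [Real.dist_eq] at this
      simpa using this
    have e1 : ∑ s, f (X s) ≤ ∑ s, fK (X s) + ∑ s, H (X s) := by
      rw [← Finset.sum_add_distrib]
      apply Finset.sum_le_sum
      intro s _
      have := le_of_abs_le (hd (X s))
      linarith
    have e2 : ∫ x, fK x ∂μ ≤ ∫ x, f x ∂μ + ∫ x, H x ∂μ := by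
      rw [← integral_add hfi (hi K)]
      apply integral_mono hfKi (hfi.add (hi K))
      intro x
      have := neg_le_of_abs_le (hd x)
      simp only [Pi.add_apply]
      linarith
    have e3 : ∑ s, (f (X s) - ∫ y, f y ∂μ) = ∑ s, f (X s) - n * ∫ y, f y ∂μ := by
      rw [Finset.sum_sub_distrib]; simp
    have e4 : n * sig μ n fK X = ∑ s, fK (X s) - n * ∫ x, fK x ∂μ := by
      unfold sig
      rw [mul_sub, ← mul_assoc, mul_inv_cancel₀ hn'.ne', one_mul]
    have e5 : n * ((n : ℝ)⁻¹ * ∑ s, H (X s)) = ∑ s, H (X s) := by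
      rw [← mul_assoc, mul_inv_cancel₀ hn'.ne', one_mul]
    have e6 := mul_le_mul_of_nonneg_left hfK hn'.le
    have e7 := mul_le_mul_of_nonneg_left e2 hn'.le
    rw [e3, mul_add, mul_add, e5]
    linarith
  have hint : Integrable (fun X : Fin n → E => G X + ((n : ℝ)⁻¹ * ∑ s, H (X s)))
    (sampleMeasure μ n) := hG.add hm.1
  have h2 := integral_mono (Sd_integrable (μ := μ) hI Finset.univ)
    ((hint.add (integrable_const (∫ x, H x ∂μ))).const_mul (n : ℝ)) key
  rw [div_le_iff₀ hn']
  refine h2.trans ?_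
  have h3 : ∫ X : Fin n → E, (n : ℝ) * (G X + ((n : ℝ)⁻¹ * ∑ s, H (X s)) + ∫ x, H x ∂μ)
      ∂(sampleMeasure μ n) = n * (∫ X, G X ∂(sampleMeasure μ n) + ∫ x, H x ∂μ + ∫ x, H x ∂μ) := by
    rw [integral_const_mul, integral_add hint (integrable_const _), integral_add hG hm.1, hm.2]
    simp [hH]
  refine (le_of_eq h3).trans ?_
  rw [mul_comm]
  apply mul_le_mul_of_nonneg_right _ hn'.le
  have := hc K
  linarith

lemma upper_final (hI : ∀ x₀ : E, Integrable (fun x => dist x x₀) μ) {n : ℕ} (hn : 1 ≤ n) :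
    expWp 1 μ n ≤ 5 * ∑ k ∈ Finset.range (Nat.log 2 n + 1),
          ENNReal.ofReal (Real.sqrt ((2 : ℝ) ^ k / n)) * unifQuantErr 1 (2 ^ k) μ := by
  have hn' : (0 : ℝ) < n := by exact_mod_cast hn
  rw [expWp_eq hI hn]
  set a := (∫ X, Sd μ Finset.univ X ∂(sampleMeasure μ n)) / n with ha
  set K := Nat.log 2 n with hK
  set e : ℕ → ℝ := fun k => √((2 : ℝ) ^ k / n) with he
  have he0 : ∀ k, 0 ≤ e k := fun k => Real.sqrt_nonneg _
  set b : ℕ → ℝ := fun k => (unifQuantErr 1 (2 ^ k) μ).toReal with hb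
  have hbfin : ∀ k, unifQuantErr 1 (2 ^ k) μ = ENNReal.ofReal (b k) := fun k =>
    (ENNReal.ofReal_toReal (b_ne_top hI (pow_pos two_pos k))).symm
  have hb0 : ∀ k, 0 ≤ b k := fun k => ENNReal.toReal_nonneg
  have hrhs : 5 * ∑ k ∈ Finset.range (K + 1),
      ENNReal.ofReal (Real.sqrt ((2 : ℝ) ^ k / n)) * unifQuantErr 1 (2 ^ k) μ =
      ENNReal.ofReal (5 * ∑ k ∈ Finset.range (K + 1), e k * b k) := by
    rw [ENNReal.ofReal_mul (by norm_num), ENNReal.ofReal_sum_of_nonneg fun k _ =>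
      mul_nonneg (he0 k) (hb0 k)]
    simp_rw [fun k => ENNReal.ofReal_mul (he0 k) (q := b k), hbfin, he]
    rw [ENNReal.ofReal_ofNat]
  rw [hrhs]
  apply ENNReal.ofReal_le_ofReal
  have hes : ∀ i, e (i + 1) = √2 * e i := by
    intro i
    simp only [he]
    rw [← Real.sqrt_mul (by norm_num)]
    congr 1; ring
  have hs2 : √2 ≤ 1.5 := by
    rw [Real.sqrt_le_left (by norm_num)]; norm_num
  have hs22 : √2 * √2 = 2 := Real.mul_self_sqrt (by norm_num)
  have hs20 : 0 ≤ √2 := Real.sqrt_nonneg _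
  have heK : 1 ≤ √2 * e K := by
    rw [← hes]
    simp only [he]
    rw [Real.one_le_sqrt, one_le_div hn']
    have : n < 2 ^ (K + 1) := Nat.lt_pow_succ_log_self (by norm_num) n
    exact_mod_cast this.le
  have main : ∀ δ : ℝ, 0 < δ → a ≤ 5 * ∑ k ∈ Finset.range (K + 1), e k * (b k + δ) := by
    intro δ hδ
    have : ∀ k, ∃ z : Fin (2 ^ k) → E,
        Wp 1 μ (empiricalMeasure (2 ^ k) z) < ENNReal.ofReal (b k + δ) := by
      intro k
      have hlt : unifQuantErr 1 (2 ^ k) μ < ENNReal.ofReal (b k + δ) := by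
        rw [hbfin, ENNReal.ofReal_lt_ofReal_iff (by linarith [hb0 k])]
        linarith
      unfold unifQuantErr at hlt
      rwa [iInf_lt_iff] at hlt
    choose z hz using this
    have h1 := upper_real hI hn z (fun k => b k + δ) hz K
    set c : ℕ → ℝ := fun k => b k + δ with hc
    have hc0 : ∀ k, 0 ≤ c k := fun k => by simp only [hc]; linarith [hb0 k]
    have h2 : ∑ i ∈ Finset.range K, √((2 : ℝ) ^ (i + 1) / n) * (c (i + 1) + c i) =
        ∑ i ∈ Finset.range K, e (i + 1) * c (i + 1) + √2 * ∑ i ∈ Finset.range K, e i * c i := by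
      rw [Finset.mul_sum, ← Finset.sum_add_distrib]
      apply Finset.sum_congr rfl
      intro i _
      rw [show √((2 : ℝ) ^ (i + 1) / n) = e (i + 1) from rfl, mul_add, hes, mul_assoc, mul_assoc]
    have h3 : ∑ i ∈ Finset.range K, e (i + 1) * c (i + 1) + e 0 * c 0 =
        ∑ i ∈ Finset.range (K + 1), e i * c i := 
      (Finset.sum_range_succ' (fun i => e i * c i) K).symm
    have h4 := Finset.sum_range_succ (fun i => e i * c i) K
    have h5 : 0 ≤ e 0 * c 0 := mul_nonneg (he0 0) (hc0 0)
    have h6 : 0 ≤ ∑ i ∈ Finset.range K, e i * c i :=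
      Finset.sum_nonneg fun i _ => mul_nonneg (he0 i) (hc0 i)
    have h7 : c K ≤ √2 * (e K * c K) := by
      have := mul_le_mul_of_nonneg_right heK (hc0 K)
      linarith
    have h8 : 0 ≤ e K * c K := mul_nonneg (he0 K) (hc0 K)
    rw [h2] at h1
    change a ≤ 5 * ∑ k ∈ Finset.range (K + 1), e k * c k
    nlinarith
  apply _root_.le_of_forall_pos_le_add
  intro ε hε
  set T := ∑ k ∈ Finset.range (K + 1), e k with hT
  have hT0 : 0 ≤ T := Finset.sum_nonneg fun k _ => he0 k
  have hT1 : 0 < 5 * T + 1 := by linarith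
  have h1 := main (ε / (5 * T + 1)) (div_pos hε hT1)
  simp_rw [mul_add, Finset.sum_add_distrib, ← Finset.sum_mul] at h1
  refine h1.trans ?_
  rw [mul_add]
  gcongr
  change 5 * (T * (ε / (5 * T + 1))) ≤ ε
  rw [← mul_div_assoc, ← mul_div_assoc, div_le_iff₀ hT1]
  nlinarith

end upper2

/-- **Theorem (main1).** Let `(E, d_E)` be a separable metric space, `μ ∈ 𝒫₁(E)` and
`n ∈ ℕ`. Then
`(1/(22√ln(2n))) · max_{0 ≤ k ≤ ⌊log₂ n⌋} √(2^k/n) · b_{2^k,1}(μ) ≤ 𝔼[W₁(μ_n, μ)]`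
and `𝔼[W₁(μ_n, μ)] ≤ 5 · ∑_{k=0}^{⌊log₂ n⌋} √(2^k/n) · b_{2^k,1}(μ)`. -/
theorem stmt_0 {E : Type*} [MetricSpace E] [TopologicalSpace.SeparableSpace E]
    [MeasurableSpace E] [BorelSpace E]
    (μ : Measure E) [IsProbabilityMeasure μ] (hμ : HasFiniteMoment 1 μ)
    (n : ℕ) (hn : 1 ≤ n) :
    ENNReal.ofReal (1 / (22 * Real.sqrt (Real.log (2 * n)))) *
        (⨆ k ∈ Finset.range (Nat.log 2 n + 1),
          ENNReal.ofReal (Real.sqrt ((2 : ℝ) ^ k / n)) * unifQuantErr 1 (2 ^ k) μ)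
      ≤ expWp 1 μ n ∧
    expWp 1 μ n ≤ 5 * ∑ k ∈ Finset.range (Nat.log 2 n + 1),
          ENNReal.ofReal (Real.sqrt ((2 : ℝ) ^ k / n)) * unifQuantErr 1 (2 ^ k) μ := by
  haveI := UniformSpace.secondCountable_of_separable E
  have hI : ∀ x₀ : E, Integrable (fun x => dist x x₀) μ := moment_integrable hμ
  exact ⟨lower_final hI hn, upper_final hI hn⟩
end

section
/- Let (E,d_E) be a separable metric space, let p ≥ 1, let μ ∈ 𝒫_p(E) and let n ∈ ℕ. Then (𝔼[W_p(μ_n, μ)^p])^{1/p} ≤ 5 · ∑_{k=0}^{⌊log₂ n⌋} (2^k/n)^{1/(2p)} · b_{2^k,p}(μ), where μ_n is the empirical measure of μ with sample size n. -/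
open MeasureTheory ENNReal Filter

section Helpers

theorem aux_map_sum {α β ι : Type*} [MeasurableSpace α] [MeasurableSpace β]
    (s : Finset ι) (m : ι → Measure α) {f : α → β} (hf : Measurable f) :
    (∑ i ∈ s, m i).map f = ∑ i ∈ s, (m i).map f := by
  classical
  induction s using Finset.induction_on with
  | empty => simp
  | insert a s ha ih => rw [Finset.sum_insert ha, Finset.sum_insert ha, Measure.map_add _ _ hf, ih]

variable {E : Type*} [MetricSpace E] [MeasurableSpace E]

theorem Wp_le_of_coupling (p : ℝ) {μ ν : Measure E} (γ : Measure (E × E))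
    (h1 : γ.map Prod.fst = μ) (h2 : γ.map Prod.snd = ν) :
    Wp p μ ν ≤ (∫⁻ z, edist z.1 z.2 ^ p ∂γ) ^ (1 / p) :=
  iInf₂_le γ ⟨h1, h2⟩

variable [TopologicalSpace.SeparableSpace E] [BorelSpace E]

theorem aux_meas_edist (p : ℝ) : Measurable (fun z : E × E => edist z.1 z.2 ^ p) := by
  haveI : SecondCountableTopology E := UniformSpace.secondCountable_of_separable E
  exact (measurable_edist).pow_const p

theorem Wp_comm (p : ℝ) (μ ν : Measure E) : Wp p μ ν = Wp p ν μ := by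
  have key : ∀ μ ν : Measure E, Wp p μ ν ≤ Wp p ν μ := by
    intro μ ν
    refine le_iInf₂ fun γ hγ => ?_
    refine (Wp_le_of_coupling p (γ.map Prod.swap) ?_ ?_).trans ?_
    · rw [Measure.map_map measurable_fst measurable_swap]; exact hγ.2
    · rw [Measure.map_map measurable_snd measurable_swap]; exact hγ.1
    · rw [lintegral_map (aux_meas_edist p) measurable_swap]
      simp [edist_comm]
  exact le_antisymm (key _ _) (key _ _)

theorem Wp_add_le (p : ℝ) (hp : 1 ≤ p) (m x y : Measure E) :
    Wp p (m + x) (m + y) ≤ Wp p x y := by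
  refine le_iInf₂ fun γ hγ => ?_
  have hd : Measurable (fun e : E => (e, e)) := by fun_prop
  refine (Wp_le_of_coupling p (m.map (fun e => (e, e)) + γ) ?_ ?_).trans ?_
  · rw [Measure.map_add _ _ measurable_fst, Measure.map_map measurable_fst hd, hγ.1]
    congr 1
    exact Measure.map_id
  · rw [Measure.map_add _ _ measurable_snd, Measure.map_map measurable_snd hd, hγ.2]
    congr 1
    exact Measure.map_id
  · rw [lintegral_add_measure, lintegral_map (aux_meas_edist p) hd]
    have : (0:ℝ) < p := by linarith
    simp [this]

/-- discrete measure -/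
noncomputable def Dm {ι : Type*} [Fintype ι] (x : ι → E) (a : ι → ℝ≥0∞) : Measure E :=
  ∑ i, a i • Measure.dirac (x i)

theorem Dm_add {ι : Type*} [Fintype ι] (x : ι → E) (a b : ι → ℝ≥0∞) :
    Dm x (a + b) = Dm x a + Dm x b := by
  simp [Dm, add_smul, Finset.sum_add_distrib]

theorem empirical_eq_Dm (n : ℕ) (X : Fin n → E) :
    empiricalMeasure n X = Dm X (fun _ => (n : ℝ≥0∞)⁻¹) := by
  simp [Dm, empiricalMeasure, Finset.smul_sum]

theorem Wp_Dm_le {ι κ : Type*} [Fintype ι] [Fintype κ] (p : ℝ) (x : ι → E) (y : κ → E)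
    (a : ι → ℝ≥0∞) (b : κ → ℝ≥0∞) (P : ι → κ → ℝ≥0∞)
    (ha : ∀ i, ∑ j, P i j = a i) (hb : ∀ j, ∑ i, P i j = b j) :
    Wp p (Dm x a) (Dm y b) ≤ (∑ i, ∑ j, P i j * edist (x i) (y j) ^ p) ^ (1 / p) := by
  refine (Wp_le_of_coupling p (∑ i, ∑ j, P i j • Measure.dirac (x i, y j)) ?_ ?_).trans ?_
  · rw [aux_map_sum _ _ measurable_fst]
    simp_rw [aux_map_sum _ _ measurable_fst, Measure.map_smul, Measure.map_dirac' measurable_fst,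
      ← Finset.sum_smul, ha]
    rfl
  · rw [aux_map_sum _ _ measurable_snd]
    simp_rw [aux_map_sum _ _ measurable_snd, Measure.map_smul, Measure.map_dirac' measurable_snd]
    rw [Finset.sum_comm]
    simp_rw [← Finset.sum_smul, hb]
    rfl
  · simp_rw [lintegral_finsetSum_measure, lintegral_smul_measure,
      lintegral_dirac' _ (aux_meas_edist p)]
    simp

theorem aux_restrict_sum (ν : Measure E) (S : Finset E) (hS : ν (S : Set E)ᶜ = 0)
    (γ : Measure (E × E)) (f : E × E → E) (hf : Measurable f) (h : γ.map f = ν) :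
    ∑ s ∈ S, γ.restrict (f ⁻¹' {s}) = γ := by
  have e1 : γ.restrict (⋃ s ∈ S, f ⁻¹' {s}) = Measure.sum
    (fun s : S => γ.restrict (f ⁻¹' {(s:E)})) := by
    rw [← Measure.restrict_iUnion]
    · congr 1
      ext z; simp
    · intro a b hab
      refine Set.disjoint_left.2 ?_
      rintro z hz hz'
      apply hab
      have e1 : f z = a := hz
      have e2 : f z = b := hz'
      exact Subtype.ext (e1.symm.trans e2)
    · intro s
      exact hf (measurableSet_singleton _)
  rw [← Finset.sum_coe_sort S (fun s => γ.restrict (f ⁻¹' {s})), ← Measure.sum_fintype, ← e1]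
  apply Measure.restrict_eq_self_of_ae_mem
  have : γ (f ⁻¹' (S : Set E)ᶜ) = 0 := by
    rw [← Measure.map_apply hf S.finite_toSet.measurableSet.compl, h, hS]
  rw [ae_iff]
  convert this using 2
  ext z; simp

/-- gluing through a finitely supported measure -/
theorem aux_glue (γ₁ γ₂ : Measure (E × E)) (ν : Measure E) [IsFiniteMeasure ν]
    (S : Finset E) (hS : ν (S : Set E)ᶜ = 0)
    [IsFiniteMeasure γ₁] [IsFiniteMeasure γ₂]
    (h1 : γ₁.map Prod.snd = ν) (h2 : γ₂.map Prod.fst = ν) :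
    ∃ Γ : Measure (E × E × E), Γ.map (fun z => (z.1, z.2.1)) = γ₁ ∧
      Γ.map (fun z => (z.2.1, z.2.2)) = γ₂ := by
  let m₁ : E → Measure E := fun s => (γ₁.restrict (Prod.snd ⁻¹' {s})).map Prod.fst
  let m₂ : E → Measure E := fun s => (γ₂.restrict (Prod.fst ⁻¹' {s})).map Prod.snd
  have hm₁ : ∀ s, m₁ s Set.univ = ν {s} := by
    intro s
    simp only [m₁]
    rw [Measure.map_apply measurable_fst MeasurableSet.univ, Set.preimage_univ,
      Measure.restrict_apply MeasurableSet.univ, Set.univ_inter, ← h1,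
      Measure.map_apply measurable_snd (measurableSet_singleton s)]
  have hm₂ : ∀ s, m₂ s Set.univ = ν {s} := by
    intro s
    simp only [m₂]
    rw [Measure.map_apply measurable_snd MeasurableSet.univ, Set.preimage_univ,
      Measure.restrict_apply MeasurableSet.univ, Set.univ_inter, ← h2,
      Measure.map_apply measurable_fst (measurableSet_singleton s)]
  have hr₁ : ∀ s, (m₁ s).map (fun e => (e, s)) = γ₁.restrict (Prod.snd ⁻¹' {s}) := by
    intro s
    simp only [m₁]
    rw [Measure.map_map (by fun_prop) measurable_fst]
    conv_rhs => rw [← Measure.map_id (μ := γ₁.restrict (Prod.snd ⁻¹' {s}))]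
    apply Measure.map_congr
    filter_upwards [ae_restrict_mem (measurable_snd (measurableSet_singleton s))] with z hz
    have : z.2 = s := hz
    simp [← this]
  have hr₂ : ∀ s, (m₂ s).map (fun e => (s, e)) = γ₂.restrict (Prod.fst ⁻¹' {s}) := by
    intro s
    simp only [m₂]
    rw [Measure.map_map (by fun_prop) measurable_snd]
    conv_rhs => rw [← Measure.map_id (μ := γ₂.restrict (Prod.fst ⁻¹' {s}))]
    apply Measure.map_congr
    filter_upwards [ae_restrict_mem (measurable_fst (measurableSet_singleton s))] with z hz
    have : z.1 = s := hz
    simp [← this]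
  have hsum : ∀ (γ : Measure (E × E)) (f : E × E → E), Measurable f → γ.map f = ν →
      ∑ s ∈ S, γ.restrict (f ⁻¹' {s}) = γ := fun γ f hf h => aux_restrict_sum ν S hS γ f hf h
  refine ⟨∑ s ∈ S, (ν {s})⁻¹ • ((m₁ s).prod (m₂ s)).map (fun z => (z.1, s, z.2)), ?_, ?_⟩
  · rw [aux_map_sum _ _ (by fun_prop), ← hsum γ₁ Prod.snd measurable_snd h1]
    refine Finset.sum_congr rfl fun s _ => ?_
    rw [Measure.map_smul, Measure.map_map (by fun_prop) (by fun_prop), ← hr₁]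
    have : ((fun z : E × E × E => (z.1, z.2.1)) ∘ fun z : E × E => (z.1, s, z.2))
      = (fun e => (e, s)) ∘ Prod.fst := rfl
    rw [this, ← Measure.map_map (by fun_prop) measurable_fst, Measure.map_fst_prod, hm₂,
      Measure.map_smul, smul_smul]
    by_cases h0 : ν {s} = 0
    · have : m₁ s = 0 := by rw [← Measure.measure_univ_eq_zero, hm₁, h0]
      simp [this]
    · rw [ENNReal.inv_mul_cancel h0 (measure_ne_top _ _), one_smul]
  · rw [aux_map_sum _ _ (by fun_prop), ← hsum γ₂ Prod.fst measurable_fst h2]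
    refine Finset.sum_congr rfl fun s _ => ?_
    rw [Measure.map_smul, Measure.map_map (by fun_prop) (by fun_prop), ← hr₂]
    have : ((fun z : E × E × E => (z.2.1, z.2.2)) ∘ fun z : E × E => (z.1, s, z.2))
      = (fun e => (s, e)) ∘ Prod.snd := rfl
    rw [this, ← Measure.map_map (by fun_prop) measurable_snd, Measure.map_snd_prod, hm₁,
      Measure.map_smul, smul_smul]
    by_cases h0 : ν {s} = 0
    · have : m₂ s = 0 := by rw [← Measure.measure_univ_eq_zero, hm₂, h0]
      simp [this]
    · rw [ENNReal.inv_mul_cancel h0 (measure_ne_top _ _), one_smul]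

theorem Wp_triangle (p : ℝ) (hp : 1 ≤ p) (μ ν ρ : Measure E) [IsFiniteMeasure ν]
    (S : Finset E) (hS : ν (S : Set E)ᶜ = 0) :
    Wp p μ ρ ≤ Wp p μ ν + Wp p ν ρ := by
  unfold Wp
  simp_rw [ENNReal.iInf_add, ENNReal.add_iInf]
  refine le_iInf₂ fun γ₁ h₁ => le_iInf₂ fun γ₂ h₂ => ?_
  have i1 : IsFiniteMeasure γ₁ := by
    constructor
    have := measure_lt_top ν Set.univ
    rwa [← h₁.2, Measure.map_apply measurable_snd MeasurableSet.univ] at this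
  have i2 : IsFiniteMeasure γ₂ := by
    constructor
    have := measure_lt_top ν Set.univ
    rwa [← h₂.1, Measure.map_apply measurable_fst MeasurableSet.univ] at this
  obtain ⟨Γ, hΓ₁, hΓ₂⟩ := aux_glue γ₁ γ₂ ν S hS h₁.2 h₂.1
  have hm := aux_meas_edist (E := E)
  refine (Wp_le_of_coupling p (Γ.map (fun z => (z.1, z.2.2))) ?_ ?_).trans ?_
  · rw [Measure.map_map (by fun_prop) (by fun_prop), ← h₁.1, ← hΓ₁,
      Measure.map_map (by fun_prop) (by fun_prop)]
    rfl
  · rw [Measure.map_map (by fun_prop) (by fun_prop), ← h₂.2, ← hΓ₂,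
      Measure.map_map (by fun_prop) (by fun_prop)]
    rfl
  · rw [← hΓ₁, ← hΓ₂, lintegral_map (hm p) (by fun_prop), lintegral_map (hm p) (by fun_prop),
      lintegral_map (hm p) (by fun_prop)]
    have hm1 : Measurable (fun z : E × E => edist z.1 z.2) := by simpa using hm 1
    refine le_trans ?_ (ENNReal.lintegral_Lp_add_le (f := fun z : E × E × E => edist z.1 z.2.1)
      (g := fun z : E × E × E => edist z.2.1 z.2.2)
      (hm1.comp (by fun_prop : Measurable fun z : E × E × E => (z.1, z.2.1))).aemeasurable
      (hm1.comp (by fun_prop : Measurable fun z : E × E × E => (z.2.1, z.2.2))).aemeasurable hp)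
    gcongr with z
    exact edist_triangle _ _ _

theorem Dm_supp {ι : Type*} [Fintype ι] (x : ι → E) (a : ι → ℝ≥0∞) :
    ∃ S : Finset E, Dm x a (S : Set E)ᶜ = 0 := by
  classical
  refine ⟨Finset.univ.image x, ?_⟩
  simp only [Dm, Measure.finsetSum_apply, Measure.smul_apply, Measure.dirac_apply, smul_eq_mul]
  refine Finset.sum_eq_zero fun i _ => ?_
  simp

theorem Dm_finite {ι : Type*} [Fintype ι] (x : ι → E) (a : ι → ℝ≥0∞) (ha : ∀ i, a i ≠ ∞) :
    IsFiniteMeasure (Dm x a) := by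
  constructor
  simp [Dm, Measure.finsetSum_apply, ENNReal.sum_lt_top, lt_top_iff_ne_top, ha]

theorem Wp_triangle_Dm (p : ℝ) (hp : 1 ≤ p) (μ ρ : Measure E) {ι : Type*} [Fintype ι]
    (x : ι → E) (a : ι → ℝ≥0∞) (ha : ∀ i, a i ≠ ∞) :
    Wp p μ ρ ≤ Wp p μ (Dm x a) + Wp p (Dm x a) ρ := by
  obtain ⟨S, hS⟩ := Dm_supp x a
  haveI := Dm_finite x a ha
  exact Wp_triangle p hp _ _ _ S hS

end Helpers

section Helpers2

variable {E : Type*} [MetricSpace E] [MeasurableSpace E]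

theorem aux_var (μ : Measure E) [IsProbabilityMeasure μ] (n : ℕ) (hn : 1 ≤ n)
    (g : E → ℝ≥0∞) (hg : Measurable g) (hg1 : ∀ e, g e ≤ 1) (q : ℝ≥0∞) (hq : ∫⁻ e, g e ∂μ = q) :
    ∃ D : (Fin n → E) → ℝ≥0∞, Measurable D ∧
      (∀ X, (∑ i, (n : ℝ≥0∞)⁻¹ * g (X i)) - q ≤ D X) ∧
      (∀ X, q - (∑ i, (n : ℝ≥0∞)⁻¹ * g (X i)) ≤ D X) ∧
      ∫⁻ X, D X ∂(sampleMeasure μ n) ≤ (q / n) ^ (1 / 2 : ℝ) := by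
  have hgt : ∀ e, g e ≠ ∞ := fun e => ne_top_of_le_ne_top one_ne_top (hg1 e)
  have hn0 : (n : ℝ≥0∞) ≠ 0 := by simp; omega
  have hnt : (n : ℝ≥0∞) ≠ ∞ := by simp
  have hq1 : q ≤ 1 := by
    rw [← hq]; calc _ ≤ ∫⁻ _, 1 ∂μ := lintegral_mono hg1
      _ = 1 := by simp
  have hqt : q ≠ ∞ := ne_top_of_le_ne_top one_ne_top hq1
  set G : E → ℝ := fun e => (g e).toReal with hG
  have hGm : Measurable G := hg.ennreal_toReal
  have hG0 : ∀ e, 0 ≤ G e := fun e => ENNReal.toReal_nonneg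
  have hG1 : ∀ e, G e ≤ 1 := fun e => by
    have := ENNReal.toReal_mono one_ne_top (hg1 e); simpa using this
  have hGL : MemLp G 2 μ := MemLp.of_bound hGm.aestronglyMeasurable 1
    (Eventually.of_forall fun e => by rw [Real.norm_eq_abs, abs_of_nonneg (hG0 e)]; exact hG1 e)
  have hGi : ∫ e, G e ∂μ = q.toReal := by
    rw [integral_toReal hg.aemeasurable (Eventually.of_forall fun e => (hgt e).lt_top), hq]
  set T : (Fin n → E) → ℝ := ∑ i, fun X => G (X i) with hT
  have hTa : ∀ X, T X = ∑ i, G (X i) := fun X => by simp [hT]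
  have hTm : Measurable T := by
    have : T = fun X => ∑ i, G (X i) := funext hTa
    rw [this]
    exact Finset.measurable_sum _ fun i _ => hGm.comp (measurable_pi_apply i)
  have hpi : sampleMeasure μ n = Measure.pi fun _ => μ := rfl
  haveI : IsProbabilityMeasure (sampleMeasure μ n) := by rw [hpi]; infer_instance
  have hTL : MemLp T 2 (sampleMeasure μ n) := by
    rw [hT]
    exact memLp_finsetSum' _ fun i _ =>
      hGL.comp_measurePreserving (measurePreserving_eval (fun _ : Fin n => μ) i)
  have hvar : ProbabilityTheory.variance T (sampleMeasure μ n) ≤ n * q.toReal := by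
    rw [hT, hpi, ProbabilityTheory.variance_sum_pi (fun _ => hGL)]
    have : ProbabilityTheory.variance G μ ≤ q.toReal := by
      refine (ProbabilityTheory.variance_le_expectation_sq hGm.aestronglyMeasurable).trans ?_
      rw [← hGi]
      refine integral_mono hGL.integrable_sq (hGL.integrable (by norm_num)) fun e => ?_
      simp only [Pi.pow_apply]
      nlinarith [hG0 e, hG1 e]
    calc _ ≤ ∑ i : Fin n, q.toReal := Finset.sum_le_sum fun i _ => this
      _ = _ := by simp
  have hTi : ∫ X, T X ∂(sampleMeasure μ n) = n * q.toReal := by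
    simp_rw [hTa]
    rw [integral_finsetSum]
    · have : ∀ i : Fin n, ∫ X, G (X i) ∂(sampleMeasure μ n) = q.toReal := by
        intro i
        have hmp := (measurePreserving_eval (fun _ : Fin n => μ) i).map_eq
        rw [← hGi]
        conv_rhs => rw [← hmp]
        rw [integral_map]
        · rfl
        · exact (measurable_pi_apply i).aemeasurable
        · exact hGm.aestronglyMeasurable
      simp [this]
    · intro i _
      exact (hGL.comp_measurePreserving
        (measurePreserving_eval (fun _ : Fin n => μ) i)).integrable (by norm_num)
  have hsumT : ∀ X : Fin n → E, (∑ i, (n : ℝ≥0∞)⁻¹ * g (X i))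
      = (n : ℝ≥0∞)⁻¹ * ENNReal.ofReal (T X) := by
    intro X
    rw [hTa, ENNReal.ofReal_sum_of_nonneg (fun i _ => hG0 _), ← Finset.mul_sum]
    simp [hG, ENNReal.ofReal_toReal, hgt]
  have hqT : q = (n : ℝ≥0∞)⁻¹ * ENNReal.ofReal (n * q.toReal) := by
    rw [ENNReal.ofReal_mul (by positivity), ENNReal.ofReal_toReal hqt, ENNReal.ofReal_natCast,
      ← mul_assoc, ENNReal.inv_mul_cancel hn0 hnt, one_mul]
  have hT0 : ∀ X, 0 ≤ T X := fun X => by rw [hTa]; exact Finset.sum_nonneg fun i _ => hG0 _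
  have hDm : Measurable fun X => ‖T X - n * q.toReal‖ₑ := (hTm.sub_const _).enorm
  refine ⟨fun X => (n : ℝ≥0∞)⁻¹ * ‖T X - n * q.toReal‖ₑ, hDm.const_mul _, ?_, ?_, ?_⟩
  · intro X
    rw [tsub_le_iff_right, hsumT]
    conv_rhs => enter [2]; rw [hqT]
    rw [← mul_add, Real.enorm_eq_ofReal_abs, ← ENNReal.ofReal_add (abs_nonneg _) (by positivity)]
    gcongr
    linarith [le_abs_self (T X - n * q.toReal)]
  · intro X
    rw [tsub_le_iff_right, hsumT]
    conv_lhs => rw [hqT]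
    rw [← mul_add, Real.enorm_eq_ofReal_abs, ← ENNReal.ofReal_add (abs_nonneg _) (hT0 X)]
    gcongr
    linarith [neg_abs_le (T X - n * q.toReal)]
  · rw [lintegral_const_mul _ hDm]
    have h2 := ENNReal.lintegral_mul_le_Lp_mul_Lq (sampleMeasure μ n)
      (p := 2) (q := 2) Real.HolderConjugate.two_two hDm.aemeasurable
      (g := fun _ => 1) aemeasurable_const
    have h3 : ∫⁻ X, ‖T X - n * q.toReal‖ₑ ^ (2:ℝ) ∂(sampleMeasure μ n) ≤ n * q := by
      have := ProbabilityTheory.ofReal_variance hTL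
      rw [ProbabilityTheory.evariance, hTi] at this
      simp only [ENNReal.rpow_two]
      rw [← this]
      refine (ENNReal.ofReal_le_ofReal hvar).trans ?_
      rw [ENNReal.ofReal_mul (by positivity), ENNReal.ofReal_toReal hqt, ENNReal.ofReal_natCast]
    simp only [Pi.mul_apply, mul_one, ENNReal.one_rpow, lintegral_const, measure_univ] at h2
    calc _ ≤ (n : ℝ≥0∞)⁻¹ * ((n:ℝ≥0∞) * q) ^ (1 / 2 : ℝ) := by
          gcongr
          exact h2.trans (by gcongr)
      _ = ((n : ℝ≥0∞)⁻¹ ^ (2:ℝ)) ^ (1 / 2 : ℝ) * ((n:ℝ≥0∞) * q) ^ (1 / 2 : ℝ) := by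
          rw [← ENNReal.rpow_mul]; norm_num
      _ = _ := by
          rw [← ENNReal.mul_rpow_of_nonneg _ _ (by norm_num)]
          congr 1
          rw [ENNReal.rpow_two, sq, mul_assoc, ← mul_assoc _ (n : ℝ≥0∞),
            ENNReal.inv_mul_cancel hn0 hnt, one_mul, mul_comm, div_eq_mul_inv]

variable [TopologicalSpace.SeparableSpace E] [BorelSpace E]

/-- A fractional assignment of the points of `E` to the sites `x j`. -/
structure QD (p : ℝ) (μ : Measure E) (N : ℕ) (β : ℝ≥0∞) (x : Fin N → E)
    (f : Fin N → E → ℝ≥0∞) : Prop where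
  meas : ∀ j, Measurable (f j)
  one : ∀ e, ∑ j, f j e = 1
  int : ∀ j, ∫⁻ e, f j e ∂μ = (N : ℝ≥0∞)⁻¹
  cost : (∑ j, ∫⁻ e, f j e * edist e (x j) ^ p ∂μ) ^ (1 / p) ≤ β

theorem aux_mink (p : ℝ) (hp : 1 ≤ p) (μ : Measure E) {N M : ℕ} {β β' : ℝ≥0∞}
    {x : Fin N → E} {y : Fin M → E} {f : Fin N → E → ℝ≥0∞} {h : Fin M → E → ℝ≥0∞}
    (hf : QD p μ N β x f) (hh : QD p μ M β' y h) :
    (∑ i, ∑ j, (∫⁻ e, f i e * h j e ∂μ) * edist (x i) (y j) ^ p) ^ (1 / p) ≤ β + β' := by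
  let Γ : Measure (E × E × E) := ∑ i, ∑ j,
    (μ.withDensity (fun e => f i e * h j e)).map (fun e => (x i, e, y j))
  have hm := aux_meas_edist (E := E)
  have hmes : ∀ i j, Measurable (fun e => f i e * h j e) := fun i j => (hf.meas i).mul (hh.meas j)
  have hΓ : ∀ φ : E × E × E → ℝ≥0∞, Measurable φ →
      ∫⁻ z, φ z ∂Γ = ∑ i, ∑ j, ∫⁻ e, f i e * h j e * φ (x i, e, y j) ∂μ := by
    intro φ hφ
    simp only [Γ, lintegral_finsetSum_measure]
    refine Finset.sum_congr rfl fun i _ => Finset.sum_congr rfl fun j _ => ?_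
    have hφ' : Measurable fun e => φ (x i, e, y j) :=
      hφ.comp (by fun_prop : Measurable fun e => (x i, e, y j))
    rw [lintegral_map hφ (by fun_prop)]
    exact lintegral_withDensity_eq_lintegral_mul _ (hmes i j) hφ'
  have hm1 : Measurable (fun z : E × E => edist z.1 z.2) := by simpa using hm 1
  have ha : Measurable fun z : E × E × E => edist z.1 z.2.1 :=
    hm1.comp (by fun_prop : Measurable fun z : E × E × E => (z.1, z.2.1))
  have hb : Measurable fun z : E × E × E => edist z.2.1 z.2.2 :=
    hm1.comp (by fun_prop : Measurable fun z : E × E × E => (z.2.1, z.2.2))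
  have hc : Measurable fun z : E × E × E => edist z.1 z.2.2 :=
    hm1.comp (by fun_prop : Measurable fun z : E × E × E => (z.1, z.2.2))
  have key := ENNReal.lintegral_Lp_add_le (μ := Γ) ha.aemeasurable hb.aemeasurable hp
  have hde : ∀ s : E, Measurable fun e : E => edist e s ^ p := fun s => by fun_prop
  have e1 : ∫⁻ z, edist z.1 z.2.1 ^ p ∂Γ = ∑ j, ∫⁻ e, f j e * edist e (x j) ^ p ∂μ := by
    rw [hΓ _ (ha.pow_const p)]
    refine Finset.sum_congr rfl fun i _ => ?_
    rw [← lintegral_finsetSum]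
    · refine lintegral_congr fun e => ?_
      simp only
      simp_rw [mul_assoc, ← Finset.mul_sum, ← Finset.sum_mul, hh.one, one_mul, edist_comm]
    · intro j _
      simp only [edist_comm (x i)]
      exact (hmes i j).mul (hde _)
  have e2 : ∫⁻ z, edist z.2.1 z.2.2 ^ p ∂Γ = ∑ j, ∫⁻ e, h j e * edist e (y j) ^ p ∂μ := by
    rw [hΓ _ (hb.pow_const p), Finset.sum_comm]
    refine Finset.sum_congr rfl fun i _ => ?_
    rw [← lintegral_finsetSum]
    · refine lintegral_congr fun e => ?_
      simp only
      simp_rw [mul_assoc, ← Finset.sum_mul, hf.one, one_mul]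
    · intro j _
      exact (hmes j i).mul (hde _)
  have e3 : ∫⁻ z, edist z.1 z.2.2 ^ p ∂Γ
      = ∑ i, ∑ j, (∫⁻ e, f i e * h j e ∂μ) * edist (x i) (y j) ^ p := by
    rw [hΓ _ (hc.pow_const p)]
    refine Finset.sum_congr rfl fun i _ => Finset.sum_congr rfl fun j _ => ?_
    simp only
    rw [lintegral_mul_const _ (hmes i j)]
  rw [← e3]
  calc _ ≤ _ := by
        gcongr with z
        exact edist_triangle _ z.2.1 _
    _ ≤ _ := key
    _ ≤ _ := by
        rw [e1, e2]
        exact add_le_add hf.cost hh.cost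

theorem aux_QD (p : ℝ) (μ : Measure E) [IsProbabilityMeasure μ] (N : ℕ) (hN : 1 ≤ N)
    (β : ℝ≥0∞) (hβ : unifQuantErr p N μ < β) :
    ∃ (x : Fin N → E) (f : Fin N → E → ℝ≥0∞), QD p μ N β x f ∧
      Wp p μ (empiricalMeasure N x) ≤ β := by
  classical
  obtain ⟨x, hx⟩ := iInf_lt_iff.1 hβ
  have hx' := hx
  unfold Wp at hx'
  obtain ⟨γ, hγ'⟩ := iInf_lt_iff.1 hx'
  obtain ⟨hγ, hc⟩ := iInf_lt_iff.1 hγ'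
  refine ⟨x, ?_⟩
  have hN0 : (N : ℝ≥0∞) ≠ 0 := by simp; omega
  have hNt : (N : ℝ≥0∞) ≠ ∞ := by simp
  have hfin : IsFiniteMeasure γ := by
    constructor
    have := measure_lt_top μ Set.univ
    rwa [← hγ.1, Measure.map_apply measurable_fst MeasurableSet.univ] at this
  let cnt : E → ℝ≥0∞ := fun s => ((Finset.univ.filter fun j => x j = s).card : ℝ≥0∞)
  have hcnt0 : ∀ j, cnt (x j) ≠ 0 := by
    intro j
    simp only [cnt, ne_eq, Nat.cast_eq_zero, Finset.card_eq_zero]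
    exact Finset.ne_empty_of_mem (a := j) (by simp)
  have hcntt : ∀ s, cnt s ≠ ∞ := fun s => by simp [cnt]
  let S : Finset E := Finset.univ.image x
  have hS : empiricalMeasure N x (S : Set E)ᶜ = 0 := by
    simp only [empiricalMeasure, Measure.finsetSum_apply, Measure.smul_apply, Measure.dirac_apply,
      smul_eq_mul, S]
    simp
  let G : E → Measure (E × E) := fun s => γ.restrict (Prod.snd ⁻¹' {s})
  have hG : ∑ s ∈ S, G s = γ := aux_restrict_sum _ S hS γ _ measurable_snd hγ.2
  have hG2 : ∑ j, (cnt (x j))⁻¹ • G (x j) = γ := by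
    conv_rhs => rw [← hG]
    rw [← Finset.sum_fiberwise_of_maps_to (s := Finset.univ) (t := S) (g := x)
      (fun i _ => by simp [S])]
    refine Finset.sum_congr rfl fun s hs => ?_
    obtain ⟨j, -, rfl⟩ := Finset.mem_image.1 hs
    rw [Finset.sum_congr rfl (g := fun _ => (cnt (x j))⁻¹ • G (x j))
      (fun i hi => by rw [(Finset.mem_filter.1 hi).2])]
    rw [Finset.sum_const, ← Nat.cast_smul_eq_nsmul ℝ≥0∞, smul_smul]
    change (cnt (x j) * (cnt (x j))⁻¹) • _ = _
    rw [ENNReal.mul_inv_cancel (hcnt0 j) (hcntt _), one_smul]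
  let m : Fin N → Measure E := fun j => (cnt (x j))⁻¹ • (G (x j)).map Prod.fst
  have hm : ∑ j, m j = μ := by
    rw [← hγ.1, ← hG2, aux_map_sum _ _ measurable_fst]
    simp only [m, Measure.map_smul]
  have hmle : ∀ j, m j ≤ μ := by
    intro j
    conv_rhs => rw [← hm]
    intro s
    rw [Measure.finsetSum_apply]
    exact Finset.single_le_sum (f := fun i => m i s) (fun i _ => zero_le) (Finset.mem_univ j)
  have hmu : ∀ j, m j Set.univ = (N : ℝ≥0∞)⁻¹ := by
    intro j
    simp only [m, G, Measure.smul_apply, smul_eq_mul]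
    rw [Measure.map_apply measurable_fst MeasurableSet.univ, Set.preimage_univ,
      Measure.restrict_apply MeasurableSet.univ, Set.univ_inter,
      ← Measure.map_apply measurable_snd (measurableSet_singleton _), hγ.2]
    have : empiricalMeasure N x {x j} = (N : ℝ≥0∞)⁻¹ * cnt (x j) := by
      simp [empiricalMeasure, Measure.finsetSum_apply, Set.indicator_apply, cnt]
    rw [this, mul_comm, mul_assoc, ENNReal.mul_inv_cancel (hcnt0 j) (hcntt _), mul_one]
  have hmf : ∀ j, IsFiniteMeasure (m j) := fun j =>
    ⟨by rw [hmu]; simpa [pos_iff_ne_zero] using (by omega : N ≠ 0)⟩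
  let f0 : Fin N → E → ℝ≥0∞ := fun j => (m j).rnDeriv μ
  have hf0m : ∀ j, Measurable (f0 j) := fun j => Measure.measurable_rnDeriv _ _
  have hf0 : ∀ j, μ.withDensity (f0 j) = m j := fun j =>
    Measure.withDensity_rnDeriv_eq _ _ (hmle j).absolutelyContinuous
  have hsm : Measurable fun e => ∑ j, f0 j e := Finset.measurable_sum _ fun j _ => hf0m j
  have hf1 : (fun e => ∑ j, f0 j e) =ᵐ[μ] 1 := by
    refine (withDensity_eq_iff_of_sigmaFinite hsm.aemeasurable (g := 1)
      measurable_one.aemeasurable).1 ?_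
    rw [withDensity_one]
    ext s hs
    rw [withDensity_apply _ hs, lintegral_finsetSum _ fun j _ => hf0m j]
    conv_rhs => rw [← hm]
    rw [Measure.finsetSum_apply]
    refine Finset.sum_congr rfl fun j _ => ?_
    rw [← hf0 j, withDensity_apply _ hs]
  let A : Set E := {e | ∑ j, f0 j e = 1}
  have hA : MeasurableSet A := hsm (measurableSet_singleton 1)
  let f : Fin N → E → ℝ≥0∞ := fun j e => if e ∈ A then f0 j e else
    if j = ⟨0, hN⟩ then 1 else 0
  have hff : ∀ j, f j =ᵐ[μ] f0 j := by
    intro j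
    filter_upwards [hf1] with e he
    have : e ∈ A := he
    simp [f, this]
  refine ⟨f, ⟨?_, ?_, ?_, ?_⟩, hx.le⟩
  · intro j
    exact Measurable.ite hA (hf0m j) measurable_const
  · intro e
    by_cases he : e ∈ A
    · simp only [f, he, if_true]; exact he
    · simp [f, he]
  · intro j
    rw [lintegral_congr_ae (hff j), ← hmu j, ← hf0 j, withDensity_apply _ MeasurableSet.univ,
      setLIntegral_univ]
  · refine le_trans (le_of_eq ?_) hc.le
    congr 1
    conv_rhs => rw [← hG2]
    rw [lintegral_finsetSum_measure]
    refine Finset.sum_congr rfl fun j _ => ?_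
    have hde : Measurable fun e : E => edist e (x j) ^ p := by fun_prop
    calc _ = ∫⁻ e, (f0 j * fun e => edist e (x j) ^ p) e ∂μ := by
          refine lintegral_congr_ae ?_
          filter_upwards [hff j] with e he
          simp [he]
      _ = ∫⁻ e, edist e (x j) ^ p ∂(m j) := by
          rw [← lintegral_withDensity_eq_lintegral_mul _ (hf0m j) hde, hf0]
      _ = _ := by
          simp only [m, lintegral_smul_measure]
          congr 1
          rw [lintegral_map hde measurable_fst]
          refine lintegral_congr_ae ?_
          filter_upwards [ae_restrict_mem (measurable_snd (measurableSet_singleton (x j)))]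
            with z hz
          have : z.2 = x j := hz
          simp [this]

end Helpers2

section Helpers3

variable {E : Type*} [MetricSpace E] [MeasurableSpace E]
variable [TopologicalSpace.SeparableSpace E] [BorelSpace E]

theorem aux_split {ι : Type*} [Fintype ι] (p : ℝ) (hp : 1 ≤ p) (y : ι → E) (s t : ι → ℝ≥0∞) :
    Wp p (Dm y s) (Dm y t) ≤ Wp p (Dm y (fun j => s j - t j)) (Dm y (fun j => t j - s j)) := by
  have hs : s = (fun j => min (s j) (t j)) + fun j => s j - t j := by
    funext j; simp [add_comm _ (s j - t j), tsub_add_min]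
  have ht : t = (fun j => min (s j) (t j)) + fun j => t j - s j := by
    funext j
    simp only [Pi.add_apply]
    rw [add_comm, min_comm, tsub_add_min]
  have e1 := (congrArg (Dm y) hs).trans (Dm_add y _ _)
  have e2 := (congrArg (Dm y) ht).trans (Dm_add y _ _)
  exact (congrArg₂ (Wp p) e1 e2).trans_le (Wp_add_le p hp _ _ _)

theorem aux_scale (p : ℝ) (hp : 1 ≤ p) (n N : ℕ) (hN : 1 ≤ N) (c : ℝ≥0∞) :
    (((N : ℝ≥0∞)⁻¹ / n) ^ (1 / 2 : ℝ) * (N * c)) ^ (1 / p)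
      = ((N : ℝ≥0∞) / n) ^ (1 / (2 * p)) * c ^ (1 / p) := by
  have hN0 : (N : ℝ≥0∞) ≠ 0 := by simp; omega
  have hNt : (N : ℝ≥0∞) ≠ ∞ := by simp
  have hp0 : 0 < p := by linarith
  have e : ((N : ℝ≥0∞)⁻¹ / n) ^ (1 / 2 : ℝ) * N = ((N : ℝ≥0∞) / n) ^ (1 / 2 : ℝ) := by
    have : (N : ℝ≥0∞) = ((N : ℝ≥0∞) ^ (2:ℝ)) ^ (1 / 2 : ℝ) := by
      rw [← ENNReal.rpow_mul]; norm_num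
    conv_lhs => enter [2]; rw [this]
    rw [← ENNReal.mul_rpow_of_nonneg _ _ (by norm_num)]
    congr 1
    rw [ENNReal.rpow_two, sq, div_eq_mul_inv, div_eq_mul_inv, mul_comm (N : ℝ≥0∞)⁻¹, mul_assoc,
      ← mul_assoc (N : ℝ≥0∞)⁻¹, ENNReal.inv_mul_cancel hN0 hNt, one_mul, mul_comm]
  rw [← mul_assoc, e, ENNReal.mul_rpow_of_nonneg _ _ (by positivity), ← ENNReal.rpow_mul]
  congr 2
  field_simp

theorem aux_chain (p : ℝ) (hp : 1 ≤ p) (μ : Measure E) [IsProbabilityMeasure μ]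
    (n : ℕ) (hn : 1 ≤ n) (β : ℕ → ℝ≥0∞) (x : ∀ k, Fin (2 ^ k) → E)
    (f : ∀ k, Fin (2 ^ k) → E → ℝ≥0∞) (hQ : ∀ k, QD p μ (2 ^ k) (β k) (x k) (f k)) (K : ℕ) :
    ∀ g : Fin (2 ^ K) → E → ℝ≥0∞, (∀ j, Measurable (g j)) → (∀ e, ∑ j, g j e = 1) →
      (∀ j, ∫⁻ e, g j e ∂μ = ((2 ^ K : ℕ) : ℝ≥0∞)⁻¹) →
      ∃ B : (Fin n → E) → ℝ≥0∞, Measurable B ∧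
        (∀ X, Wp p
          (Dm (x K) fun j => (∑ i, (n : ℝ≥0∞)⁻¹ * g j (X i)) - ((2 ^ K : ℕ) : ℝ≥0∞)⁻¹)
          (Dm (x K) fun j => ((2 ^ K : ℕ) : ℝ≥0∞)⁻¹ - (∑ i, (n : ℝ≥0∞)⁻¹ * g j (X i))) ≤ B X) ∧
        (∫⁻ X, B X ^ p ∂(sampleMeasure μ n)) ^ (1 / p) ≤
          ∑ k ∈ Finset.range K,
            2 * ((((2 ^ (k + 1) : ℕ) : ℝ≥0∞) / n) ^ (1 / (2 * p)) * (β (k + 1) + β k)) := by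
  have hp0 : 0 < p := by linarith
  have hn0 : (n : ℝ≥0∞) ≠ 0 := by simp; omega
  have hnt : (n : ℝ≥0∞) ≠ ∞ := by simp
  induction K with
  | zero =>
    intro g _ hg1 _
    haveI : Subsingleton (Fin (2 ^ 0)) := inferInstanceAs (Subsingleton (Fin 1))
    have hg : ∀ j e, g j e = 1 := by
      intro j e
      have := hg1 e
      rw [Fintype.sum_subsingleton _ j] at this
      exact this
    refine ⟨fun _ => 0, measurable_const, ?_, ?_⟩
    · intro X
      have h1 : (n : ℝ≥0∞) * (n : ℝ≥0∞)⁻¹ = 1 := ENNReal.mul_inv_cancel hn0 hnt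
      refine (Wp_Dm_le p _ _ _ _ (fun _ _ => 0) ?_ ?_).trans ?_
      · intro i; simp [hg, h1]
      · intro i; simp [hg, h1]
      · simp [hp0]
    · simp [hp0]
  | succ K ih =>
    intro g hgm hg1 hgi
    have hN : (1 : ℝ≥0∞) ≤ ((2 ^ (K + 1) : ℕ) : ℝ≥0∞) := by
      exact_mod_cast Nat.one_le_two_pow
    have hNt : ((2 ^ (K + 1) : ℕ) : ℝ≥0∞) ≠ ∞ := ENNReal.natCast_ne_top _
    set N : ℝ≥0∞ := ((2 ^ (K + 1) : ℕ) : ℝ≥0∞) with hNdef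
    have hN0 : N ≠ 0 := (zero_lt_one.trans_le hN).ne'
    set q : ℝ≥0∞ := N⁻¹ with hq
    set q' : ℝ≥0∞ := ((2 ^ K : ℕ) : ℝ≥0∞)⁻¹ with hq'
    have hQ1 := hQ (K + 1)
    have hQ0 := hQ K
    let Q : Fin (2 ^ (K + 1)) → Fin (2 ^ K) → ℝ≥0∞ :=
      fun i j => ∫⁻ e, f (K + 1) i e * f K j e ∂μ
    have hmes : ∀ i j, Measurable (fun e => f (K + 1) i e * f K j e) :=
      fun i j => (hQ1.meas i).mul (hQ0.meas j)
    have hQr : ∀ i, ∑ j, Q i j = q := by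
      intro i
      simp only [Q]
      rw [← lintegral_finsetSum _ (fun j _ => hmes i j)]
      simp_rw [← Finset.mul_sum, hQ0.one, mul_one]
      exact hQ1.int i
    have hQc : ∀ j, ∑ i, Q i j = q' := by
      intro j
      simp only [Q]
      rw [← lintegral_finsetSum _ (fun i _ => hmes i j)]
      simp_rw [← Finset.sum_mul, hQ1.one, one_mul]
      exact hQ0.int j
    let P : Fin (2 ^ (K + 1)) → Fin (2 ^ K) → ℝ≥0∞ := fun i j => N * Q i j
    have hPr : ∀ i, ∑ j, P i j = 1 := by
      intro i
      simp only [P]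
      rw [← Finset.mul_sum, hQr, hq, ENNReal.mul_inv_cancel hN0 hNt]
    have hPc : ∀ j, ∑ i, q * P i j = q' := by
      intro j
      simp only [P]
      rw [← hQc]
      refine Finset.sum_congr rfl fun i _ => ?_
      rw [← mul_assoc, hq, ENNReal.inv_mul_cancel hN0 hNt, one_mul]
    have hP1 : ∀ i j, P i j ≤ 1 := fun i j => by
      rw [← hPr i]; exact Finset.single_le_sum (f := P i) (fun _ _ => zero_le) (Finset.mem_univ j)
    have hg1' : ∀ j e, g j e ≤ 1 := fun j e => by
      rw [← hg1 e]
      exact Finset.single_le_sum (f := fun j => g j e) (fun _ _ => zero_le) (Finset.mem_univ j)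
    obtain ⟨B, hBm, hB, hBn⟩ := ih (fun j e => ∑ i, g i e * P i j)
      (fun j => Finset.measurable_sum _ fun i _ => (hgm i).mul_const _)
      (fun e => by
        rw [Finset.sum_comm]
        simp_rw [← Finset.mul_sum, hPr, mul_one]
        exact hg1 e)
      (fun j => by
        rw [lintegral_finsetSum _ fun i _ => (hgm i).mul_const _]
        simp_rw [lintegral_mul_const _ (hgm _), hgi]
        exact hPc j)
    choose D hDm hD1 hD2 hDi using fun j => aux_var μ n hn (g j) (hgm j) (hg1' j) q (hgi j)
    let c : Fin (2 ^ (K + 1)) → ℝ≥0∞ := fun i => ∑ j, P i j * edist (x (K + 1) i) (x K j) ^ p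
    let A : (Fin n → E) → ℝ≥0∞ := fun X => (∑ i, D i X * c i) ^ (1 / p)
    have hA0 : Measurable fun X => ∑ i, D i X * c i :=
      Finset.measurable_sum _ fun i _ => (hDm i).mul_const _
    have hAm : Measurable A := hA0.pow_const _
    have hAn : (∫⁻ X, A X ^ p ∂(sampleMeasure μ n)) ^ (1 / p) ≤
        (N / n) ^ (1 / (2 * p)) * (β (K + 1) + β K) := by
      have e1 : ∀ X, A X ^ p = ∑ i, D i X * c i := by
        intro X
        simp only [A]
        rw [← ENNReal.rpow_mul, one_div_mul_cancel hp0.ne', ENNReal.rpow_one]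
      simp_rw [e1]
      rw [lintegral_finsetSum _ fun i _ => (hDm i).mul_const _]
      simp_rw [lintegral_mul_const _ (hDm _)]
      calc _ ≤ (∑ i, (q / n) ^ (1 / 2 : ℝ) * c i) ^ (1 / p) := by
            gcongr with i
            exact hDi i
        _ = ((q / n) ^ (1 / 2 : ℝ) *
              (N * ∑ i, ∑ j, Q i j * edist (x (K + 1) i) (x K j) ^ p)) ^ (1 / p) := by
            rw [← Finset.mul_sum]
            congr 2
            simp only [c, P, mul_assoc, ← Finset.mul_sum]
        _ = _ := aux_scale p hp n (2 ^ (K + 1)) Nat.one_le_two_pow _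
        _ ≤ _ := by
            gcongr
            exact aux_mink p hp μ hQ1 hQ0
    refine ⟨fun X => A X + (B X + A X), hAm.add (hBm.add hAm), ?_, ?_⟩
    · intro X
      set α : Fin (2 ^ (K + 1)) → ℝ≥0∞ := fun j => ∑ i, (n : ℝ≥0∞)⁻¹ * g j (X i) with hα
      have hα1 : ∀ j, α j ≤ 1 := by
        intro j
        calc α j ≤ ∑ i : Fin n, (n : ℝ≥0∞)⁻¹ * 1 := by
              simp only [hα]
              gcongr with i
              exact hg1' _ _
          _ = 1 := by simp [ENNReal.mul_inv_cancel hn0 hnt]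
      have hq1 : q ≤ 1 := by
        rw [hq, ENNReal.inv_le_one]; exact hN
      have hfin : ∀ a : Fin (2 ^ (K + 1)) → ℝ≥0∞, (∀ i, a i ≤ 1) → ∀ j, ∑ i, a i * P i j ≠ ∞ := by
        intro a ha j
        rw [← lt_top_iff_ne_top, ENNReal.sum_lt_top]
        intro i _
        exact ENNReal.mul_lt_top ((ha i).trans_lt one_lt_top) ((hP1 i j).trans_lt one_lt_top)
      have hs := hfin (fun i => α i - q) (fun i => tsub_le_self.trans (hα1 i))
      have ht := hfin (fun i => q - α i) (fun i => tsub_le_self.trans hq1)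
      have hM := hfin (fun i => min q (α i)) (fun i => (min_le_left _ _).trans hq1)
      refine (Wp_triangle_Dm p hp _ _ (x K) (fun j => ∑ i, (α i - q) * P i j) hs).trans ?_
      refine add_le_add ?_ ((Wp_triangle_Dm p hp _ _ (x K)
        (fun j => ∑ i, (q - α i) * P i j) ht).trans (add_le_add ?_ ?_))
      · refine (Wp_Dm_le p _ _ _ _ (fun i j => (α i - q) * P i j) ?_ ?_).trans ?_
        · intro i; rw [← Finset.mul_sum, hPr, mul_one]
        · intro j; rfl
        · simp only [A, c]
          simp_rw [mul_assoc, ← Finset.mul_sum]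
          gcongr with i
          exact hD1 i X
      · refine (aux_split p hp _ _ _).trans ?_
        have ea : ∀ j, ∑ i, (n : ℝ≥0∞)⁻¹ * ∑ i', g i' (X i) * P i' j
            = ∑ i, min q (α i) * P i j + ∑ i, (α i - q) * P i j := by
          intro j
          rw [← Finset.sum_add_distrib]
          simp_rw [← add_mul]
          calc _ = ∑ i', α i' * P i' j := by
                simp_rw [hα, Finset.mul_sum, Finset.sum_mul]
                rw [Finset.sum_comm]
                simp_rw [mul_assoc]
            _ = _ := by
                refine Finset.sum_congr rfl fun i _ => ?_
                rw [min_comm, add_comm, tsub_add_min]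
        have eb : ∀ j, q' = ∑ i, min q (α i) * P i j + ∑ i, (q - α i) * P i j := by
          intro j
          rw [← Finset.sum_add_distrib, ← hPc j]
          refine Finset.sum_congr rfl fun i _ => ?_
          rw [← add_mul, add_comm, tsub_add_min]
        refine le_trans (le_of_eq ?_) (hB X)
        congr 2
        · funext j
          rw [ea j, eb j, ENNReal.add_sub_add_eq_sub_left (hM j)]
        · funext j
          rw [ea j, eb j, ENNReal.add_sub_add_eq_sub_left (hM j)]
      · rw [Wp_comm]
        refine (Wp_Dm_le p _ _ _ _ (fun i j => (q - α i) * P i j) ?_ ?_).trans ?_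
        · intro i; rw [← Finset.mul_sum, hPr, mul_one]
        · intro j; rfl
        · simp only [A, c]
          simp_rw [mul_assoc, ← Finset.mul_sum]
          gcongr with i
          exact hD2 i X
    · refine (ENNReal.lintegral_Lp_add_le hAm.aemeasurable (hBm.add hAm).aemeasurable hp).trans ?_
      refine (add_le_add le_rfl
        (ENNReal.lintegral_Lp_add_le hBm.aemeasurable hAm.aemeasurable hp)).trans ?_
      rw [Finset.sum_range_succ]
      refine (add_le_add hAn (add_le_add hBn hAn)).trans (le_of_eq ?_)
      rw [two_mul]
      ring

theorem aux_main (p : ℝ) (hp : 1 ≤ p) (μ : Measure E) [IsProbabilityMeasure μ]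
    (n : ℕ) (hn : 1 ≤ n) (β : ℕ → ℝ≥0∞) (hβ : ∀ k, unifQuantErr p (2 ^ k) μ < β k) (K : ℕ) :
    expWpPow p μ n ≤ 2 * β K + ∑ k ∈ Finset.range K,
      2 * ((((2 ^ (k + 1) : ℕ) : ℝ≥0∞) / n) ^ (1 / (2 * p)) * (β (k + 1) + β k)) := by
  have hp0 : 0 < p := by linarith
  have hn0 : (n : ℝ≥0∞) ≠ 0 := by simp; omega
  have hnt : (n : ℝ≥0∞) ≠ ∞ := by simp
  choose x f hQ hW using fun k => aux_QD p μ (2 ^ k) Nat.one_le_two_pow (β k) (hβ k)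
  have hQK := hQ K
  obtain ⟨B, hBm, hB, hBn⟩ := aux_chain p hp μ n hn β x f hQ K (f K) hQK.meas hQK.one hQK.int
  haveI : IsProbabilityMeasure (sampleMeasure μ n) := by unfold sampleMeasure; infer_instance
  let φ : E → ℝ≥0∞ := fun e => ∑ j, f K j e * edist e (x K j) ^ p
  have hφj : ∀ j, Measurable fun e => f K j e * edist e (x K j) ^ p :=
    fun j => (hQK.meas j).mul (by fun_prop)
  have hφ : Measurable φ := Finset.measurable_sum _ fun j _ => hφj j
  let F : (Fin n → E) → ℝ≥0∞ := fun X => (∑ i, (n : ℝ≥0∞)⁻¹ * φ (X i)) ^ (1 / p)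
  have hFi : ∀ i : Fin n, Measurable fun X : Fin n → E => (n : ℝ≥0∞)⁻¹ * φ (X i) :=
    fun i => (hφ.comp (measurable_pi_apply i)).const_mul _
  have hFm : Measurable F := (Finset.measurable_sum _ fun i _ => hFi i).pow_const _
  have hFn : (∫⁻ X, F X ^ p ∂(sampleMeasure μ n)) ^ (1 / p) ≤ β K := by
    have e1 : ∀ X, F X ^ p = ∑ i, (n : ℝ≥0∞)⁻¹ * φ (X i) := by
      intro X
      simp only [F]
      rw [← ENNReal.rpow_mul, one_div_mul_cancel hp0.ne', ENNReal.rpow_one]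
    simp_rw [e1]
    rw [lintegral_finsetSum _ fun i _ => hFi i]
    have e2 : ∀ i : Fin n, ∫⁻ X : Fin n → E, (n : ℝ≥0∞)⁻¹ * φ (X i) ∂(sampleMeasure μ n)
        = (n : ℝ≥0∞)⁻¹ * ∫⁻ e, φ e ∂μ := by
      intro i
      have hφi : Measurable fun X : Fin n → E => φ (X i) := hφ.comp (measurable_pi_apply i)
      rw [lintegral_const_mul _ hφi]
      congr 1
      exact (measurePreserving_eval (fun _ : Fin n => μ) i).lintegral_comp hφ
    simp_rw [e2]
    rw [Finset.sum_const, Finset.card_univ, Fintype.card_fin, nsmul_eq_mul, ← mul_assoc,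
      ENNReal.mul_inv_cancel hn0 hnt, one_mul]
    simp only [φ]
    rw [lintegral_finsetSum _ fun j _ => hφj j]
    exact hQK.cost
  have hpt : ∀ X, Wp p (empiricalMeasure n X) μ ≤ F X + (B X + β K) := by
    intro X
    have hα1 : ∀ j, ∑ i, (n : ℝ≥0∞)⁻¹ * f K j (X i) ≠ ∞ := by
      intro j
      rw [← lt_top_iff_ne_top, ENNReal.sum_lt_top]
      intro i _
      refine ENNReal.mul_lt_top (by simpa [pos_iff_ne_zero] using hn0) ?_
      refine lt_of_le_of_lt ?_ one_lt_top
      rw [← hQK.one (X i)]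
      exact Finset.single_le_sum (f := fun j => f K j (X i)) (fun _ _ => zero_le)
        (Finset.mem_univ j)
    have hq : ∀ j : Fin (2 ^ K), ((2 ^ K : ℕ) : ℝ≥0∞)⁻¹ ≠ ∞ := by
      intro j; simp
    refine (Wp_triangle_Dm p hp _ _ (x K) (fun j => ∑ i, (n : ℝ≥0∞)⁻¹ * f K j (X i)) hα1).trans ?_
    refine add_le_add ?_ ((Wp_triangle_Dm p hp _ _ (x K)
      (fun _ => ((2 ^ K : ℕ) : ℝ≥0∞)⁻¹) hq).trans (add_le_add ?_ ?_))
    · rw [empirical_eq_Dm]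
      refine (Wp_Dm_le p _ _ _ _ (fun i j => (n : ℝ≥0∞)⁻¹ * f K j (X i)) ?_ ?_).trans ?_
      · intro i; rw [← Finset.mul_sum, hQK.one, mul_one]
      · intro j; rfl
      · simp only [F, φ]
        simp_rw [mul_assoc, ← Finset.mul_sum]
        exact le_rfl
    · exact (aux_split p hp _ _ _).trans (hB X)
    · rw [Wp_comm, ← empirical_eq_Dm]
      exact hW K
  unfold expWpPow
  calc _ ≤ (∫⁻ X, (F X + (B X + β K)) ^ p ∂(sampleMeasure μ n)) ^ (1 / p) := by
        gcongr with X
        exact hpt X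
    _ ≤ _ := ENNReal.lintegral_Lp_add_le hFm.aemeasurable
        (hBm.add measurable_const).aemeasurable hp
    _ ≤ _ := add_le_add le_rfl
        (ENNReal.lintegral_Lp_add_le hBm.aemeasurable aemeasurable_const hp)
    _ ≤ β K + ((∑ k ∈ Finset.range K,
      2 * ((((2 ^ (k + 1) : ℕ) : ℝ≥0∞) / n) ^ (1 / (2 * p)) * (β (k + 1) + β k))) + β K) := by
        refine add_le_add hFn (add_le_add hBn ?_)
        simp only [lintegral_const, measure_univ, mul_one]
        rw [← ENNReal.rpow_mul, mul_one_div_cancel hp0.ne', ENNReal.rpow_one]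
    _ = _ := by ring

end Helpers3


section Helpers4

theorem aux_sum (r β : ℕ → ℝ≥0∞) (h : ∀ k, 2 * r (k + 1) ≤ 3 * r k) (K : ℕ) :
    3 * (r K * β K) + ∑ k ∈ Finset.range K, 2 * (r (k + 1) * (β (k + 1) + β k))
      ≤ 5 * ∑ k ∈ Finset.range (K + 1), r k * β k := by
  induction K with
  | zero =>
    simp only [Finset.range_zero, Finset.sum_empty, add_zero, zero_add, Finset.range_one,
      Finset.sum_singleton]
    gcongr
    norm_num
  | succ K ih =>
    rw [Finset.sum_range_succ, Finset.sum_range_succ _ (K + 1), mul_add 5]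
    calc _ = ∑ k ∈ Finset.range K, 2 * (r (k + 1) * (β (k + 1) + β k))
          + 2 * r (K + 1) * β K + 5 * (r (K + 1) * β (K + 1)) := by ring
      _ ≤ ∑ k ∈ Finset.range K, 2 * (r (k + 1) * (β (k + 1) + β k))
          + 3 * r K * β K + 5 * (r (K + 1) * β (K + 1)) := by
          exact add_le_add (add_le_add le_rfl (mul_le_mul_left (h K) _)) le_rfl
      _ = (3 * (r K * β K) + ∑ k ∈ Finset.range K, 2 * (r (k + 1) * (β (k + 1) + β k)))
          + 5 * (r (K + 1) * β (K + 1)) := by ring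
      _ ≤ _ := by gcongr

theorem aux_two_rpow (p : ℝ) (hp : 1 ≤ p) : (2 : ℝ) * 2 ^ (1 / (2 * p)) ≤ 3 := by
  have h1 : (2 : ℝ) ^ (1 / (2 * p)) ≤ 2 ^ (1 / 2 : ℝ) := by
    apply Real.rpow_le_rpow_of_exponent_le (by norm_num)
    apply one_div_le_one_div_of_le <;> linarith
  rw [← Real.sqrt_eq_rpow] at h1
  have : Real.sqrt 2 ≤ 3 / 2 := by
    rw [Real.sqrt_le_left (by norm_num)]; norm_num
  linarith

theorem aux_r (p : ℝ) (hp : 1 ≤ p) (a : ℝ) (ha : 0 ≤ a) :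
    2 * (2 * a) ^ (1 / (2 * p)) ≤ 3 * a ^ (1 / (2 * p)) := by
  rw [Real.mul_rpow (by norm_num) ha, ← mul_assoc]
  exact mul_le_mul_of_nonneg_right (aux_two_rpow p hp) (Real.rpow_nonneg ha _)

theorem aux_finite {E : Type*} [MetricSpace E] [MeasurableSpace E]
    [TopologicalSpace.SeparableSpace E] [BorelSpace E] (p : ℝ) (hp : 1 ≤ p)
    (μ : Measure E) [IsProbabilityMeasure μ] (hμ : HasFiniteMoment p μ) (N : ℕ) (hN : 1 ≤ N) :
    unifQuantErr p N μ ≠ ∞ := by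
  obtain ⟨x₀, hx⟩ := hμ
  have hm : Measurable (fun e : E => (e, x₀)) := by fun_prop
  have hN0 : (N : ℝ≥0∞) ≠ 0 := by simp; omega
  have hNt : (N : ℝ≥0∞) ≠ ∞ := by simp
  refine ne_top_of_le_ne_top ?_ ((iInf_le _ (fun _ => x₀)).trans
    (Wp_le_of_coupling p (μ.map (fun e => (e, x₀))) ?_ ?_))
  · rw [lintegral_map (aux_meas_edist p) hm]
    exact ENNReal.rpow_ne_top_of_nonneg (by positivity) hx
  · rw [Measure.map_map measurable_fst hm]
    exact Measure.map_id
  · rw [Measure.map_map measurable_snd hm]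
    change μ.map (fun _ => x₀) = _
    rw [Measure.map_const, measure_univ, one_smul, empiricalMeasure, Finset.sum_const,
      Finset.card_univ, Fintype.card_fin, ← Nat.cast_smul_eq_nsmul ℝ≥0∞, smul_smul,
      ENNReal.inv_mul_cancel hN0 hNt, one_smul]

end Helpers4

/-- **Theorem (main2).** Let `(E, d_E)` be a separable metric space, `p ≥ 1`,
`μ ∈ 𝒫_p(E)` and `n ∈ ℕ`. Then
`(𝔼[W_p(μ_n, μ)^p])^{1/p} ≤ 5 · ∑_{k=0}^{⌊log₂ n⌋} (2^k/n)^{1/(2p)} · b_{2^k,p}(μ)`. -/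
theorem stmt_1 {E : Type*} [MetricSpace E] [TopologicalSpace.SeparableSpace E]
    [MeasurableSpace E] [BorelSpace E]
    (p : ℝ) (hp : 1 ≤ p)
    (μ : Measure E) [IsProbabilityMeasure μ] (hμ : HasFiniteMoment p μ)
    (n : ℕ) (hn : 1 ≤ n) :
    expWpPow p μ n ≤ 5 * ∑ k ∈ Finset.range (Nat.log 2 n + 1),
        ENNReal.ofReal (((2 : ℝ) ^ k / n) ^ (1 / (2 * p))) * unifQuantErr p (2 ^ k) μ := by

  have hp0 : 0 < p := by linarith
  have hnR : (0 : ℝ) < n := by exact_mod_cast hn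
  set r : ℕ → ℝ≥0∞ := fun k => ENNReal.ofReal (((2 : ℝ) ^ k / n) ^ (1 / (2 * p))) with hr
  set K := Nat.log 2 n with hK
  have hrec : ∀ k, 2 * r (k + 1) ≤ 3 * r k := by
    intro k
    have h := aux_r p hp ((2 : ℝ) ^ k / n) (by positivity)
    have h' := ENNReal.ofReal_le_ofReal h
    rw [ENNReal.ofReal_mul (by norm_num), ENNReal.ofReal_mul (by norm_num)] at h'
    have e : (2 : ℝ) * (2 ^ k / n) = 2 ^ (k + 1) / n := by ring
    rw [e] at h'
    simpa [hr] using h'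
  have htop : 2 ≤ 3 * r K := by
    have h := aux_r p hp ((2 : ℝ) ^ K / n) (by positivity)
    have h1 : (1 : ℝ) ≤ 2 * (2 ^ K / n) := by
      have hlt : n < 2 ^ (K + 1) := Nat.lt_pow_succ_log_self (by norm_num) n
      have hlt' : (n : ℝ) < 2 ^ (K + 1) := by exact_mod_cast hlt
      have e : (2 : ℝ) * (2 ^ K / n) = 2 ^ (K + 1) / n := by ring
      rw [e, le_div_iff₀ hnR]
      linarith
    have h2 := Real.one_le_rpow h1 (by positivity : (0 : ℝ) ≤ 1 / (2 * p))
    have h3 : (2 : ℝ) ≤ 3 * (2 ^ K / n) ^ (1 / (2 * p)) := by linarith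
    have h' := ENNReal.ofReal_le_ofReal h3
    rw [ENNReal.ofReal_mul (by norm_num)] at h'
    simpa [hr] using h'
  have hrr : ∀ k, (((2 ^ k : ℕ) : ℝ≥0∞) / n) ^ (1 / (2 * p)) = r k := by
    intro k
    simp only [hr]
    rw [← ENNReal.ofReal_rpow_of_pos (by positivity), ENNReal.ofReal_div_of_pos hnR,
      ENNReal.ofReal_pow (by norm_num)]
    simp
  have hmain : ∀ ε : ℝ≥0∞, 0 < ε → expWpPow p μ n ≤
      5 * ∑ k ∈ Finset.range (K + 1), r k * (unifQuantErr p (2 ^ k) μ + ε) := by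
    intro ε hε
    have h := aux_main p hp μ n hn (fun k => unifQuantErr p (2 ^ k) μ + ε)
      (fun k => ENNReal.lt_add_right (aux_finite p hp μ hμ _ Nat.one_le_two_pow) hε.ne') K
    simp only [hrr] at h
    refine h.trans (le_trans ?_ (aux_sum r (fun k => unifQuantErr p (2 ^ k) μ + ε) hrec K))
    rw [← mul_assoc 3]
    gcongr
  have hlim : Tendsto (fun ε : ℝ≥0∞ =>
      5 * ∑ k ∈ Finset.range (K + 1), r k * (unifQuantErr p (2 ^ k) μ + ε))
      (nhdsWithin 0 (Set.Ioi 0))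
      (nhds (5 * ∑ k ∈ Finset.range (K + 1), r k * (unifQuantErr p (2 ^ k) μ + 0))) := by
    refine tendsto_nhdsWithin_of_tendsto_nhds ?_
    refine ENNReal.Tendsto.const_mul ?_ (Or.inr (by norm_num))
    refine tendsto_finsetSum _ fun k _ => ?_
    refine ENNReal.Tendsto.const_mul ?_ (Or.inr ENNReal.ofReal_ne_top)
    exact tendsto_const_nhds.add tendsto_id
  have := ge_of_tendsto hlim (eventually_nhdsWithin_of_forall fun ε hε => hmain ε hε)
  simp only [add_zero] at this
  exact this
end
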